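/- Let A be a ℂ-vector space and let ι : T(T_+(A)) → H_S(A) be the algebra morphism defined on words by ι(a_1⋯a_n) = Σ_{t∈ST(n)} t ⊗ a_1⋯a_n. Then ι is a coalgebra morphism, i.e., δ_A ∘ ι = (ι ⊗ ι) ∘ Δ and ε_A ∘ ι = ε; moreover ι intertwines the half-coproducts: δ_{≺,A} ∘ ι = (ι ⊗ ι) ∘ Δ_≺ and δ_{≻,A} ∘ ι = (ι ⊗ ι) ∘ Δ_≻ on the augmentation ideal. -/

import Mathlib

open scoped BigOperators

/-- Planar rooted trees (rose trees). -/
inductive PTree : Type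
  | node : List PTree → PTree

namespace PTree

/-- The single-vertex tree (a leaf). -/
abbrev leaf : PTree := .node []

/-- Subtree at a given path from the root (entries select children). -/
def subtreeAt : List ℕ → PTree → Option PTree
  | [], t => some t
  | i :: p, node cs => (cs[i]?).bind (subtreeAt p)

/-- `p` is (the path of) a vertex of `t`. -/
def IsVertex (t : PTree) (p : List ℕ) : Prop := (subtreeAt p t).isSome

/-- `p` is a leaf of `t`. -/
def IsLeafAt (t : PTree) (p : List ℕ) : Prop := subtreeAt p t = some leaf

/-- `p` is an internal (non-leaf) vertex of `t`. -/
def IsInternalAt (t : PTree) (p : List ℕ) : Prop :=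
  ∃ cs, subtreeAt p t = some (node cs) ∧ cs ≠ []

/-- Schröder trees: every internal vertex has at least two children. -/
inductive IsSchroder : PTree → Prop
  | leaf : IsSchroder (node [])
  | node (cs : List PTree) : 2 ≤ cs.length → (∀ c ∈ cs, IsSchroder c) → IsSchroder (node cs)

/-- Number of leaves of a tree. -/
noncomputable def numLeaves (t : PTree) : ℕ := Nat.card {p : List ℕ // IsLeafAt t p}

/-- Number of sectors between consecutive leaves. -/
noncomputable def numSectors (t : PTree) : ℕ := numLeaves t - 1

/-- Number of internal vertices. -/
noncomputable def numInternal (t : PTree) : ℕ := Nat.card {p : List ℕ // IsInternalAt t p}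

/-- The set of Schröder trees with `n+1` leaves. -/
def ST (n : ℕ) : Set PTree := {t | IsSchroder t ∧ numLeaves t = n + 1}

/-- Number of surjective strictly order-preserving maps from the poset of internal
vertices of `t` (i.e. the vertex poset of the skeleton `sk(t)`, with the root minimal,
the order being the ancestor/prefix order) onto `{1, …, k}`. This is `ω_k(sk(t))`. -/
noncomputable def omegaSkK (t : PTree) (k : ℕ) : ℕ :=
  Nat.card {f : {p : List ℕ // IsInternalAt t p} → Fin k //
    Function.Surjective f ∧ ∀ v w, v.1 <+: w.1 → v ≠ w → f v < f w}

/-- The Murua coefficient `ω(sk(t))` of the skeleton of `t`. -/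
noncomputable def omegaSk (t : PTree) : ℂ :=
  ∑ k ∈ Finset.Icc 1 (numInternal t), ((-1 : ℂ) ^ (k + 1) / (k : ℂ)) * (omegaSkK t k : ℂ)

/-- The subtree of `t` at path `p` (junk value: a leaf). -/
noncomputable def subtree! (t : PTree) (p : List ℕ) : PTree := (subtreeAt p t).getD leaf

/-- Number of leaves of `t` strictly to the left of the subtree at `p`. -/
noncomputable def leavesBefore (t : PTree) (p : List ℕ) : ℕ :=
  Nat.card {q : List ℕ // IsLeafAt t q ∧ List.Lex (· < ·) q p ∧ ¬ p <+: q}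

/-- Sector number `i` (0-indexed: the sector between the `(i+1)`-st and `(i+2)`-nd leaves of `t`)
lies strictly inside the subtree of `t` rooted at `p`. -/
def SectorIn (t : PTree) (p : List ℕ) (i : ℕ) : Prop :=
  leavesBefore t p ≤ i ∧ i + 2 ≤ leavesBefore t p + numLeaves (subtree! t p)

/-- The internal vertex `v` of `t` owns sector `i`: the sector lies in the corolla at `v`,
i.e. inside the subtree at `v` but not inside the subtree at any strictly deeper vertex. -/
def OwnsSector (t : PTree) (v : List ℕ) (i : ℕ) : Prop :=
  IsInternalAt t v ∧ SectorIn t v i ∧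
    ∀ w, IsInternalAt t w → v <+: w → w ≠ v → ¬ SectorIn t w i

/-- Sectors `i` and `j` belong to the same block of the noncrossing partition `π(t)`. -/
def SameOwner (t : PTree) (i j : ℕ) : Prop := ∃ v, OwnsSector t v i ∧ OwnsSector t v j

open Classical in
/-- `φ_{π(t)}(a_1,…,a_n)`: the product over the blocks of the noncrossing partition `π(t)`
(one block per internal vertex `v`, consisting of the sectors owned by `v`) of `φ` applied to
the ordered product of the corresponding letters of `w`. -/
noncomputable def phiPi {A : Type*} [Ring A] (φ : A → ℂ) (t : PTree) (w : List A) : ℂ :=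
  ∏ᶠ v ∈ {v : List ℕ | IsInternalAt t v},
    φ ((((List.range w.length).filter fun i => OwnsSector t v i).map fun i => w.getD i 0).prod)

/-- A corolla: a root whose (at least two) children are all leaves. -/
def corolla (m : ℕ) : PTree := node (List.replicate m leaf)

/-- `t` is a corolla. -/
def IsCorolla (t : PTree) : Prop := ∃ m, 2 ≤ m ∧ t = corolla m

/-- Graft a tree `s` onto the leftmost leaf of `t`. -/
def graftLeftmost : PTree → PTree → PTree
  | node [], s => s
  | node (c :: cs), s => node (graftLeftmost c s :: cs)

/-- Trees obtained from the single-vertex tree by repeatedly grafting a corolla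
onto the leftmost leaf. -/
inductive IsBST : PTree → Prop
  | single : IsBST leaf
  | graft (t : PTree) (m : ℕ) : IsBST t → 2 ≤ m → IsBST (graftLeftmost t (corolla m))

/-- Schröder trees whose leftmost child of the root is a leaf. -/
def IsPST (t : PTree) : Prop := ∃ cs, t = node (leaf :: cs)

end PTree
namespace PTree

mutual
  /-- List of all vertex paths of a tree. -/
  def verticesList : PTree → List (List ℕ)
    | .node cs => [] :: verticesListAux 0 cs
  def verticesListAux : ℕ → List PTree → List (List ℕ)
    | _, [] => []
    | i, c :: cs => (verticesList c).map (i :: ·) ++ verticesListAux (i + 1) cs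
end

open Classical in
/-- The `Finset` of internal vertices of `t`. -/
noncomputable def internalFinset (t : PTree) : Finset (List ℕ) :=
  ((verticesList t).filter fun p => decide (IsInternalAt t p)).toFinset

open Classical in
/-- The admissible cuts of a Schröder tree `t`: sets of internal vertices such that every
path from the root to a leaf contains at most one of them (equivalently, antichains for
the ancestor/prefix order). -/
noncomputable def cutsFinset (t : PTree) : Finset (Finset (List ℕ)) :=
  (internalFinset t).powerset.filter fun c => ∀ v ∈ c, ∀ w ∈ c, v ≠ w → ¬ v <+: w

/-- A vertex path lies on the leftmost branch iff it consists of zeros. -/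
def OnLeftBranch (v : List ℕ) : Prop := v = List.replicate v.length 0

open Classical in
/-- `Adm_≺(t)`: admissible cuts whose trunk contains the leftmost leaf of `t`,
i.e. cuts containing no vertex of the leftmost branch. -/
noncomputable def cutsPrecFinset (t : PTree) : Finset (Finset (List ℕ)) :=
  (cutsFinset t).filter fun c => ∀ v ∈ c, ¬ OnLeftBranch v

open Classical in
/-- `Adm(t) \ Adm_≺(t)`: the admissible cuts containing a vertex of the leftmost branch. -/
noncomputable def cutsSuccFinset (t : PTree) : Finset (Finset (List ℕ)) :=
  (cutsFinset t).filter fun c => ∃ v ∈ c, OnLeftBranch v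

/-- Replace the subtree at a given path by a leaf. -/
def replaceLeaf : List ℕ → PTree → PTree
  | [], _ => leaf
  | i :: p, node cs => node (cs.set i (replaceLeaf p (cs.getD i leaf)))

/-- The vertices of a cut, sorted from left to right. -/
noncomputable def sortCut (t : PTree) (c : Finset (List ℕ)) : List (List ℕ) :=
  c.toList.mergeSort fun v w => Nat.ble (leavesBefore t v) (leavesBefore t w)

/-- The trunk `R_c(t)`: replace the subtree at each vertex of the cut by a leaf. -/
noncomputable def trunkTree (t : PTree) (c : Finset (List ℕ)) : PTree :=
  (sortCut t c).foldl (fun s v => replaceLeaf v s) t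

open Classical in
/-- Sector `i` of `t` is removed by the cut `c` (it lies in one of the pruned subtrees). -/
noncomputable def RemovedIdx (t : PTree) (c : Finset (List ℕ)) (i : ℕ) : Prop :=
  ∃ v ∈ c, leavesBefore t v ≤ i ∧ i < leavesBefore t v + numSectors (subtree! t v)

/-- A decorated forest: a list of Schröder trees, each `t` decorated by a word of length
`numSectors t` labelling the sectors between consecutive leaves from left to right. -/
abbrev DForest (A : Type*) := List (PTree × List A)

/-- A genuine decorated tree: a non-unit Schröder tree with matching decoration. -/
def GoodTree {A : Type*} (d : PTree × List A) : Prop :=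
  IsSchroder d.1 ∧ d.1 ≠ leaf ∧ d.2.length = numSectors d.1

/-- A genuine decorated forest. -/
def GoodForest {A : Type*} (F : DForest A) : Prop := ∀ d ∈ F, GoodTree d

open Classical in
/-- The decoration of the trunk `R_c(t ⊗ w)`: the letters of `w` at the sectors
not removed by the cut, in their original order. -/
noncomputable def trunkWord {A : Type*} [Zero A] (t : PTree) (c : Finset (List ℕ))
    (w : List A) : List A :=
  (((List.range w.length).filter fun i => decide (¬ RemovedIdx t c i)).map fun i => w.getD i 0)

open Classical in
/-- The trunk `R_c(t ⊗ w)` as a decorated forest (empty if the trunk is the unit,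
i.e. the single-leaf tree, which is identified with `1`). -/
noncomputable def trunkPart {A : Type*} [Zero A] (d : PTree × List A)
    (c : Finset (List ℕ)) : DForest A :=
  if trunkTree d.1 c = leaf then [] else [(trunkTree d.1 c, trunkWord d.1 c d.2)]

/-- The pruning `P_c(t ⊗ w)`: the ordered forest of decorated subtrees rooted at the
vertices of the cut (left to right), each carrying the contiguous subword of `w`
decorating its sectors. -/
noncomputable def prunePart {A : Type*} (d : PTree × List A)
    (c : Finset (List ℕ)) : DForest A :=
  (sortCut d.1 c).map fun v =>
    (subtree! d.1 v, (d.2.drop (leavesBefore d.1 v)).take (numSectors (subtree! d.1 v)))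

/-- All splittings `R_c(F) ⊗ P_c(F)` of a decorated forest given by tuples of admissible
cuts (one cut per tree): the combinatorial coproduct `δ_A`. -/
noncomputable def forestSplits {A : Type*} [Zero A] :
    DForest A → List (DForest A × DForest A)
  | [] => [([], [])]
  | d :: ds => (cutsFinset d.1).toList.flatMap fun c =>
      (forestSplits ds).map fun pr => (trunkPart d c ++ pr.1, prunePart d c ++ pr.2)

/-- The splittings appearing in `δ_{≺,A}`: the first tree is cut along `Adm_≺`, the
remaining ones along all admissible cuts. -/
noncomputable def forestSplitsPrec {A : Type*} [Zero A] :
    DForest A → List (DForest A × DForest A)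
  | [] => []
  | d :: ds => (cutsPrecFinset d.1).toList.flatMap fun c =>
      (forestSplits ds).map fun pr => (trunkPart d c ++ pr.1, prunePart d c ++ pr.2)

/-- The splittings appearing in `δ_{≻,A} = δ_A − δ_{≺,A}`. -/
noncomputable def forestSplitsSucc {A : Type*} [Zero A] :
    DForest A → List (DForest A × DForest A)
  | [] => []
  | d :: ds => (cutsSuccFinset d.1).toList.flatMap fun c =>
      (forestSplits ds).map fun pr => (trunkPart d c ++ pr.1, prunePart d c ++ pr.2)

/-- The convolution product `f * g = m_ℂ ∘ (f ⊗ g) ∘ δ_A` of linear functionals on the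
Hopf algebra `H_S(A)` of decorated Schröder trees (described on the basis of decorated
forests). -/
noncomputable def convD {A : Type*} [Zero A] (f g : DForest A → ℂ) : DForest A → ℂ :=
  fun F => ((forestSplits F).map fun pr => f pr.1 * g pr.2).sum

/-- The left half-shuffle product `f ≺̃ g = m_ℂ ∘ (f ⊗ g) ∘ δ_{≺,A}`. -/
noncomputable def precD {A : Type*} [Zero A] (f g : DForest A → ℂ) : DForest A → ℂ :=
  fun F => ((forestSplitsPrec F).map fun pr => f pr.1 * g pr.2).sum

/-- The right half-shuffle product `f ≻̃ g = m_ℂ ∘ (f ⊗ g) ∘ δ_{≻,A}`. -/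
noncomputable def succD {A : Type*} [Zero A] (f g : DForest A → ℂ) : DForest A → ℂ :=
  fun F => ((forestSplitsSucc F).map fun pr => f pr.1 * g pr.2).sum

open Classical in
/-- The counit `ε_A` of `H_S(A)` as a functional. -/
noncomputable def epsD {A : Type*} : DForest A → ℂ := fun F => if F = [] then 1 else 0

open Classical in
/-- The character `Φ̃ : H_S(A) → ℂ` extending `φ`: it sends a decorated tree `t ⊗ w` to
`φ(a_1 ⋯ a_n)` if `t` is a corolla and to `0` otherwise, multiplicatively on forests. -/
noncomputable def charD {A : Type*} [Ring A] (φ : A → ℂ) : DForest A → ℂ :=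
  fun F => (F.map fun d => if IsCorolla d.1 then φ d.2.prod else 0).prod

/-- `Φ̂ = Φ̃ − ε_A`. -/
noncomputable def charHatD {A : Type*} [Ring A] (φ : A → ℂ) : DForest A → ℂ :=
  fun F => charD φ F - epsD F

/-- Convolution powers `f^{*k}` (with `f^{*0} = ε_A`). -/
noncomputable def convPowD {A : Type*} [Zero A] (f : DForest A → ℂ) : ℕ → DForest A → ℂ
  | 0 => epsD
  | k + 1 => convD f (convPowD f k)

/-- Left half-shuffle powers `α^{≺̃ k}`, with `α^{≺̃ 0} = ε_A` and
`α^{≺̃ k} = α ≺̃ α^{≺̃ (k−1)}`. -/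
noncomputable def precPowD {A : Type*} [Zero A] (α : DForest A → ℂ) : ℕ → DForest A → ℂ
  | 0 => epsD
  | k + 1 => precD α (precPowD α k)

/-- Right half-shuffle powers `α^{≻̃ k}`, with `α^{≻̃ 0} = ε_A` and
`α^{≻̃ k} = α^{≻̃ (k−1)} ≻̃ α`. -/
noncomputable def succPowD {A : Type*} [Zero A] (α : DForest A → ℂ) : ℕ → DForest A → ℂ
  | 0 => epsD
  | k + 1 => succD (succPowD α k) α

/-- The left half-shuffle exponential `E_≺̃(α) = Σ_{k ≥ 0} α^{≺̃ k}`. -/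
noncomputable def ePrecD {A : Type*} [Zero A] (α : DForest A → ℂ) : DForest A → ℂ :=
  fun F => ∑ᶠ k : ℕ, precPowD α k F

/-- The right half-shuffle exponential `E_≻̃(α) = Σ_{k ≥ 0} α^{≻̃ k}`. -/
noncomputable def eSuccD {A : Type*} [Zero A] (α : DForest A → ℂ) : DForest A → ℂ :=
  fun F => ∑ᶠ k : ℕ, succPowD α k F

/-- The convolution exponential `exp^*(α) = Σ_{k ≥ 0} α^{*k} / k!`. -/
noncomputable def expStarD {A : Type*} [Zero A] (α : DForest A → ℂ) : DForest A → ℂ :=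
  fun F => ∑ᶠ k : ℕ, ((k.factorial : ℂ))⁻¹ * convPowD α k F

/-- The convolution logarithm `log^*(Φ̃) = Σ_{k ≥ 1} ((−1)^{k+1}/k) (Φ̃ − ε_A)^{*k}`. -/
noncomputable def logStarD {A : Type*} [Ring A] (φ : A → ℂ) : DForest A → ℂ :=
  fun F => ∑ᶠ k ∈ Set.Ici (1 : ℕ), ((-1 : ℂ) ^ (k + 1) / (k : ℂ)) * convPowD (charHatD φ) k F

/-- An infinitesimal character of `H_S(A)`: it vanishes on the unit (empty forest) and on
products of two or more nonempty forests. -/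
def IsInfCharD {A : Type*} (α : DForest A → ℂ) : Prop :=
  α [] = 0 ∧ ∀ F G : DForest A, F ≠ [] → G ≠ [] → α (F ++ G) = 0

end PTree
section DoubleTensorAlgebra

open scoped TensorProduct DirectSum
open PiTensorProduct

variable (A : Type*) [AddCommGroup A] [Module ℂ A]

/-- `T_+(A) = ⊕_{n ≥ 1} A^{⊗n}` (indexed by `n = m + 1`). -/
abbrev TPlus := ⨁ (m : ℕ), (⨂[ℂ] (_ : Fin (m + 1)), A)

/-- The double tensor algebra `T(T_+(A))`, with the bar product as multiplication. -/
abbrev TT := TensorAlgebra ℂ (TPlus A)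

variable {A}

/-- The element `a_1 ⋯ a_n ∈ A^{⊗n} ⊆ T_+(A) ⊆ T(T_+(A))` determined by a word
(the unit `1` for the empty word). -/
noncomputable def wordOf : List A → TT A
  | [] => 1
  | x :: xs =>
      (TensorAlgebra.ι ℂ)
        (DirectSum.of (fun m => ⨂[ℂ] (_ : Fin (m + 1)), A) xs.length
          (PiTensorProduct.tprod ℂ (x :: xs).get))

/-- The bar product `w_1 | ⋯ | w_m ∈ T(T_+(A))` of a list of words. -/
noncomputable def sentenceOf (ws : List (List A)) : TT A := (ws.map wordOf).prod

/-- Group a list of natural numbers into maximal runs of consecutive integers. -/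
def natRunsT : List ℕ → List (List ℕ)
  | [] => []
  | x :: xs =>
    match natRunsT xs with
    | (y :: ys) :: rest => if x + 1 = y then (x :: y :: ys) :: rest else [x] :: (y :: ys) :: rest
    | _ => [[x]]

/-- The subword `a_S` of the word `l` (as an element of `T(T_+(A))`; `a_∅ = 1`). -/
noncomputable def subwordElem (l : List A) (S : Finset (Fin l.length)) : TT A :=
  wordOf ((S.sort (· ≤ ·)).map l.get)

/-- The element `a_{J^S_{[n]}} = a_{J_1} | ⋯ | a_{J_r}`, the bar product of the subwords of
`l` over the maximal intervals `J_1, …, J_r` of the complement of `S` (ordered by their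
minima). -/
noncomputable def compElem (l : List A) (S : Finset (Fin l.length)) : TT A :=
  sentenceOf ((natRunsT ((((Finset.univ : Finset (Fin l.length)) \ S).sort (· ≤ ·)).map
    Fin.val)).map fun r => r.map fun i => l.getD i 0)

variable (A)

/-- The `n`-th piece of the weight grading of `T(T_+(A))`: the span of the bar products of
words with `n` letters in total. -/
noncomputable def ttGrade (n : ℕ) : Submodule ℂ (TT A) :=
  Submodule.span ℂ {x : TT A | ∃ ws : List (List A),
    (∀ w ∈ ws, w ≠ []) ∧ (ws.map List.length).sum = n ∧ x = sentenceOf ws}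

/-- The span of the elementary tensors `x ⊗ y` with `x` of weight `i` and `y` of weight
`j`. -/
noncomputable def ttGradePair (i j : ℕ) : Submodule ℂ (TT A ⊗[ℂ] TT A) :=
  Submodule.span ℂ {z : TT A ⊗[ℂ] TT A |
    ∃ x ∈ ttGrade A i, ∃ y ∈ ttGrade A j, z = x ⊗ₜ[ℂ] y}

end DoubleTensorAlgebra
section SchroederHopfAlgebra

open scoped TensorProduct DirectSum
open PiTensorProduct

/-- Nontrivial Schröder trees (the single-leaf tree is identified with the unit). -/
def SchT : Type := {t : PTree // PTree.IsSchroder t ∧ t ≠ PTree.leaf}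

variable (A : Type*) [AddCommGroup A] [Module ℂ A]

/-- `W_S(A) = ⊕_t (H_S-basis tree t) ⊗ A^{⊗ deg t}`: the space of decorated Schröder
trees, `t` carrying `A^{⊗ numSectors t}` as decorations of its sectors. -/
noncomputable abbrev WSdec := ⨁ (t : SchT), (⨂[ℂ] (_ : Fin (PTree.numSectors t.1)), A)

/-- The Hopf algebra `H_S(A)` of decorated Schröder trees: since `H_S` is the free
noncommutative polynomial algebra on Schröder trees (with the single-leaf tree as unit),
`H_S(A) = ⊕_{n≥0} H_S(n) ⊗ A^{⊗n}` is the tensor algebra over the span of decorated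
Schröder trees. -/
noncomputable abbrev HSA := TensorAlgebra ℂ (WSdec A)

variable {A}

open Classical in
/-- The decorated Schröder tree `t ⊗ a_1⋯a_n ∈ H_S(A)` (with `w = [a_1,…,a_n]` the
decorations of the `n = numSectors t` sectors); the single-leaf tree gives the unit. -/
noncomputable def dTreeOf (t : PTree) (w : List A) : HSA A :=
  if ht : t = PTree.leaf then 1
  else if h : PTree.IsSchroder t then
    (TensorAlgebra.ι ℂ)
      (DirectSum.of (fun s : SchT => ⨂[ℂ] (_ : Fin (PTree.numSectors s.1)), A)
        ⟨t, h, ht⟩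
        (PiTensorProduct.tprod ℂ fun i => w.getD i 0))
  else 0

/-- The product in `H_S(A)` of a forest of decorated Schröder trees. -/
noncomputable def forestOf (F : PTree.DForest A) : HSA A :=
  (F.map fun d => dTreeOf d.1 d.2).prod

variable (A)

/-- The `n`-th piece of the grading of `H_S(A)`: the span of the (products of) decorated
forests of total degree `n`. -/
noncomputable def hsGrade (n : ℕ) : Submodule ℂ (HSA A) :=
  Submodule.span ℂ {x : HSA A | ∃ F : PTree.DForest A,
    PTree.GoodForest F ∧ (F.map fun d => PTree.numSectors d.1).sum = n ∧ x = forestOf F}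

/-- The span of elementary tensors `x ⊗ y` with `x` of degree `i` and `y` of degree `j`. -/
noncomputable def hsGradePair (i j : ℕ) : Submodule ℂ (HSA A ⊗[ℂ] HSA A) :=
  Submodule.span ℂ {z : HSA A ⊗[ℂ] HSA A |
    ∃ x ∈ hsGrade A i, ∃ y ∈ hsGrade A j, z = x ⊗ₜ[ℂ] y}

end SchroederHopfAlgebra

open scoped TensorProduct

/-!
A Schröder tree with an admissible cut is the same thing as a Schröder tree, the trunk, with a
Schröder tree hung at each of its leaves: the pruned subtree if the leaf is a vertex of the cut, and
the single-vertex tree otherwise. If `S` is the set of letters decorating the sectors of the trunk,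
the hung trees have as numbers of sectors the lengths of the gaps of `S`, possibly zero, so that for
given `S` the trunk ranges over `ST(|S|)` and, independently, the hung trees range over the `ST(k)`
with `k` the successive gaps. By distributivity the sum over all trees and all cuts becomes
`Σ_S ι(a_S) ⊗ ι(a_{J^S})`. The cut meets the leftmost branch if and only if the leftmost hung tree
is not a leaf, that is, if and only if the first letter is not in `S`, and this accounts for the
half-coproducts.
-/

namespace PTree

@[elab_as_elim]
theorem induction {P : PTree → Prop} (node : ∀ cs, (∀ c ∈ cs, P c) → P (node cs)) (t : PTree) :
    P t :=
  PTree.rec (motive_1 := P) (motive_2 := fun cs => ∀ c ∈ cs, P c) node (by simp)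
    (fun _ _ h₁ h₂ => by simpa using ⟨h₁, h₂⟩) t

/-- Lists of paths in the successive children of a vertex, assembled into one list of paths from
that vertex; the children are numbered from `k` on. -/
def branchPaths : ℕ → List (List (List ℕ)) → List (List ℕ)
  | _, [] => []
  | k, P :: Ps => P.map (k :: ·) ++ branchPaths (k + 1) Ps

theorem mem_branchPaths {k : ℕ} {Ps : List (List (List ℕ))} {v : List ℕ} :
    v ∈ branchPaths k Ps ↔ ∃ i p P, v = (k + i) :: p ∧ Ps[i]? = some P ∧ p ∈ P := by
  induction Ps generalizing k with
  | nil => simp [branchPaths]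
  | cons P Ps ih =>
    simp only [branchPaths, List.mem_append, List.mem_map, ih]
    constructor
    · rintro (⟨p, hp, rfl⟩ | ⟨i, p, Q, rfl, hQ, hp⟩)
      · exact ⟨0, p, P, rfl, rfl, hp⟩
      · exact ⟨i + 1, p, Q, by grind, hQ, hp⟩
    · rintro ⟨_ | i, p, Q, rfl, hQ, hp⟩
      · exact .inl ⟨p, by grind, rfl⟩
      · exact .inr ⟨i, p, Q, by grind, hQ, hp⟩

theorem cons_mem_branchPaths_map {α : Type*} {f : α → List (List ℕ)} {l : List α} {i : ℕ}
    {p : List ℕ} :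
    i :: p ∈ branchPaths 0 (l.map f) ↔ ∃ a, l[i]? = some a ∧ p ∈ f a := by
  simp only [mem_branchPaths, List.getElem?_map]
  grind

theorem nil_notMem_branchPaths {k : ℕ} {Ps : List (List (List ℕ))} : [] ∉ branchPaths k Ps := by
  simp [mem_branchPaths]

theorem branchPaths_append (k : ℕ) (Ps Qs : List (List (List ℕ))) :
    branchPaths k (Ps ++ Qs) = branchPaths k Ps ++ branchPaths (k + Ps.length) Qs := by
  induction Ps generalizing k with
  | nil => rfl
  | cons P Ps ih => simp [branchPaths, ih, Nat.add_assoc, Nat.add_comm 1]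

theorem length_branchPaths (k : ℕ) (Ps : List (List (List ℕ))) :
    (branchPaths k Ps).length = (Ps.map List.length).sum := by
  induction Ps generalizing k with
  | nil => rfl
  | cons P Ps ih => simp [branchPaths, ih]

theorem nodup_branchPaths {k : ℕ} {Ps : List (List (List ℕ))} (h : ∀ P ∈ Ps, P.Nodup) :
    (branchPaths k Ps).Nodup := by
  induction Ps generalizing k with
  | nil => exact List.nodup_nil
  | cons P Ps ih =>
    rw [List.forall_mem_cons] at h
    refine (h.1.map List.cons_injective).append (ih h.2) fun v hv hv' => ?_
    obtain ⟨p, -, rfl⟩ := List.mem_map.1 hv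
    obtain ⟨i, q, Q, he, -, -⟩ := mem_branchPaths.1 hv'
    grind

/-- The paths of the leaves of a tree, from left to right. -/
def leafPaths : PTree → List (List ℕ)
  | .node cs => if cs = [] then [[]] else branchPaths 0 (cs.map leafPaths)

theorem leafPaths_leaf : leafPaths leaf = [[]] := by
  rw [leafPaths, if_pos rfl]

theorem leafPaths_node {cs : List PTree} (h : cs ≠ []) :
    leafPaths (node cs) = branchPaths 0 (cs.map leafPaths) := by
  rw [leafPaths, if_neg h]

theorem mem_leafPaths {t : PTree} {p : List ℕ} : p ∈ leafPaths t ↔ IsLeafAt t p := by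
  induction t using PTree.induction generalizing p with
  | node cs ih =>
    by_cases hcs : cs = []
    · subst hcs
      cases p <;> simp [leafPaths_leaf, IsLeafAt, subtreeAt]
    rw [leafPaths_node hcs]
    cases p with
    | nil => simp [IsLeafAt, subtreeAt, hcs, nil_notMem_branchPaths]
    | cons i p =>
      simp only [cons_mem_branchPaths_map, IsLeafAt, subtreeAt, Option.bind_eq_some_iff]
      exact exists_congr fun c => and_congr_right fun hc => ih c (List.mem_of_getElem? hc)

theorem nodup_leafPaths (t : PTree) : (leafPaths t).Nodup := by
  induction t using PTree.induction with
  | node cs ih =>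
    by_cases hcs : cs = []
    · subst hcs
      simp [leafPaths_leaf]
    · rw [leafPaths_node hcs]
      exact nodup_branchPaths (by simpa using ih)

theorem card_isLeafAt_and (t : PTree) (Q : List ℕ → Prop) [DecidablePred Q] :
    Nat.card {p : List ℕ // IsLeafAt t p ∧ Q p} = (leafPaths t).countP (fun p => Q p) := by
  rw [List.countP_eq_length_filter, ← List.toFinset_card_of_nodup ((nodup_leafPaths t).filter _),
    ← Nat.card_eq_finsetCard]
  exact Nat.card_congr (Equiv.subtypeEquivRight fun p => by simp [mem_leafPaths])

theorem numLeaves_eq_length (t : PTree) : numLeaves t = (leafPaths t).length := by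
  simpa [numLeaves] using card_isLeafAt_and t fun _ => True

theorem numLeaves_leaf : numLeaves leaf = 1 := by
  simp [numLeaves_eq_length, leafPaths_leaf]

theorem numLeaves_node {cs : List PTree} (h : cs ≠ []) :
    numLeaves (node cs) = (cs.map numLeaves).sum := by
  simp [funext numLeaves_eq_length, leafPaths_node h, length_branchPaths, Function.comp_def]

theorem numLeaves_pos (t : PTree) : 0 < numLeaves t := by
  induction t using PTree.induction with
  | node cs ih =>
    cases cs with
    | nil => simp [numLeaves_leaf]
    | cons c cs => simp [numLeaves_node, ih c]

theorem numSectors_add_one (t : PTree) : numSectors t + 1 = numLeaves t :=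
  Nat.sub_add_cancel (numLeaves_pos t)

theorem length_le_sum_numLeaves (cs : List PTree) : cs.length ≤ (cs.map numLeaves).sum := by
  simpa using List.card_nsmul_le_sum (cs.map numLeaves) 1 (by
    simpa using fun c _ => Nat.succ_le_of_lt (numLeaves_pos c))

theorem IsSchroder.two_le_numLeaves {t : PTree} (h : IsSchroder t) (ht : t ≠ PTree.leaf) :
    2 ≤ numLeaves t := by
  cases h with
  | leaf => exact absurd rfl ht
  | node cs h₂ h =>
    rw [numLeaves_node (by rintro rfl; simp at h₂)]
    exact h₂.trans (length_le_sum_numLeaves cs)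

theorem numSectors_leaf : numSectors leaf = 0 := by
  rw [numSectors, numLeaves_leaf]

theorem IsSchroder.numSectors_eq_zero_iff {t : PTree} (h : IsSchroder t) :
    numSectors t = 0 ↔ t = PTree.leaf := by
  constructor
  · intro h0
    by_contra ht
    have := h.two_le_numLeaves ht
    have := numSectors_add_one t
    omega
  · rintro rfl
    exact numSectors_leaf

theorem leavesBefore_nil (t : PTree) : leavesBefore t [] = 0 := by
  simp [leavesBefore]

theorem leavesBefore_cons (pre : List PTree) (c : PTree) (post : List PTree) (v : List ℕ) :
    leavesBefore (node (pre ++ c :: post)) (pre.length :: v) =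
      (pre.map numLeaves).sum + leavesBefore c v := by
  classical
  have hbefore : (branchPaths 0 (pre.map leafPaths)).countP (fun q =>
      List.Lex (· < ·) q (pre.length :: v) ∧ ¬ (pre.length :: v) <+: q) =
        (pre.map numLeaves).sum := by
    rw [List.countP_eq_length.2, length_branchPaths, List.map_map]
    · simp [Function.comp_def, funext numLeaves_eq_length]
    · intro q hq
      obtain ⟨i, p, P, rfl, hP, -⟩ := mem_branchPaths.1 hq
      have hi : i < pre.length := by simpa using (List.getElem?_eq_some_iff.1 hP).1
      simp [List.Lex.rel, hi, hi.ne']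
  have hafter : (branchPaths (pre.length + 1) (post.map leafPaths)).countP (fun q =>
      List.Lex (· < ·) q (pre.length :: v) ∧ ¬ (pre.length :: v) <+: q) = 0 := by
    rw [List.countP_eq_zero]
    intro q hq
    obtain ⟨i, p, P, rfl, -, -⟩ := mem_branchPaths.1 hq
    simp only [List.cons_lex_cons_iff, decide_eq_true_eq]
    omega
  have hinside (q : List ℕ) : (List.Lex (· < ·) (pre.length :: q) (pre.length :: v) ∧
      ¬ (pre.length :: v) <+: (pre.length :: q)) ↔ List.Lex (· < ·) q v ∧ ¬ v <+: q := by
    simp [List.prefix_cons_iff]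
  simp only [leavesBefore, card_isLeafAt_and]
  rw [leafPaths_node (by simp), List.map_append, branchPaths_append, List.map_cons, branchPaths,
    List.length_map, Nat.zero_add, List.countP_append, List.countP_append, hbefore, hafter,
    List.countP_map, Nat.add_zero]
  simp only [Function.comp_def, hinside]

theorem verticesListAux_eq (k : ℕ) (cs : List PTree) :
    verticesListAux k cs = branchPaths k (cs.map verticesList) := by
  induction cs generalizing k with
  | nil => rfl
  | cons c cs ih => simp [verticesListAux, branchPaths, ih]

theorem mem_verticesList_of_subtreeAt {t s : PTree} {p : List ℕ} (h : subtreeAt p t = some s) :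
    p ∈ verticesList t := by
  induction p generalizing t with
  | nil => cases t; simp [verticesList]
  | cons i p ih =>
    obtain ⟨cs⟩ := t
    obtain ⟨c, hc, h⟩ := Option.bind_eq_some_iff.1 h
    rw [verticesList, verticesListAux_eq, List.mem_cons, cons_mem_branchPaths_map]
    exact .inr ⟨c, hc, ih h⟩

theorem mem_internalFinset {t : PTree} {p : List ℕ} :
    p ∈ internalFinset t ↔ IsInternalAt t p := by
  simp only [internalFinset, List.mem_toFinset, List.mem_filter, decide_eq_true_eq,
    and_iff_right_iff_imp]
  rintro ⟨cs, h, -⟩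
  exact mem_verticesList_of_subtreeAt h

theorem mem_cutsFinset {t : PTree} {c : Finset (List ℕ)} :
    c ∈ cutsFinset t ↔
      (∀ v ∈ c, IsInternalAt t v) ∧ ∀ v ∈ c, ∀ w ∈ c, v ≠ w → ¬ v <+: w := by
  simp [cutsFinset, Finset.subset_iff, mem_internalFinset]

theorem isInternalAt_nil {t : PTree} : IsInternalAt t [] ↔ t ≠ leaf := by
  obtain ⟨cs⟩ := t
  simp [IsInternalAt, subtreeAt]

theorem isInternalAt_cons {cs : List PTree} {i : ℕ} {p : List ℕ} :
    IsInternalAt (node cs) (i :: p) ↔ ∃ c, cs[i]? = some c ∧ IsInternalAt c p := by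
  simp only [IsInternalAt, subtreeAt, Option.bind_eq_some_iff]
  grind

theorem finite_setOf_isSchroder_numLeaves_le (m : ℕ) :
    {t : PTree | IsSchroder t ∧ numLeaves t ≤ m}.Finite := by
  induction m with
  | zero =>
    refine Set.finite_empty.subset fun t ht => ?_
    exact absurd ht.2 (numLeaves_pos t).not_ge
  | succ m ih =>
    have hf : {cs : List PTree | cs.length ≤ m + 1 ∧
        ∀ c ∈ cs, IsSchroder c ∧ numLeaves c ≤ m}.Finite := by
      have : Finite {t : PTree // IsSchroder t ∧ numLeaves t ≤ m} := ih
      refine ((List.finite_length_le {t : PTree // IsSchroder t ∧ numLeaves t ≤ m}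
        (m + 1)).image (List.map Subtype.val)).subset ?_
      rintro cs ⟨hcs, h⟩
      lift cs to List {t : PTree // IsSchroder t ∧ numLeaves t ≤ m} using h
      exact ⟨cs, by simpa using hcs, rfl⟩
    refine ((hf.image node).insert leaf).subset ?_
    rintro t ⟨ht, hm⟩
    cases ht with
    | leaf => exact .inl rfl
    | node cs h₂ h =>
      rw [numLeaves_node (by rintro rfl; simp at h₂)] at hm
      refine .inr ⟨cs, ⟨(length_le_sum_numLeaves cs).trans hm, fun c hc => ⟨h c hc, ?_⟩⟩, rfl⟩
      obtain ⟨l₁, l₂, rfl⟩ := List.append_of_mem hc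
      have h₁ := length_le_sum_numLeaves l₁
      have h₃ := length_le_sum_numLeaves l₂
      simp only [List.map_append, List.map_cons, List.sum_append, List.sum_cons, List.length_append,
        List.length_cons] at hm h₂
      omega

theorem finite_setOf_isSchroder (n : ℕ) : {t : PTree | IsSchroder t ∧ numSectors t = n}.Finite :=
  (finite_setOf_isSchroder_numLeaves_le (n + 1)).subset fun t h =>
    ⟨h.1, by rw [← numSectors_add_one, h.2]⟩

/-- The finite set `ST(n)` of Schröder trees with `n` sectors, that is, with `n + 1` leaves. -/
noncomputable def schroderFinset (n : ℕ) : Finset PTree := (finite_setOf_isSchroder n).toFinset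

theorem mem_schroderFinset {n : ℕ} {t : PTree} :
    t ∈ schroderFinset n ↔ IsSchroder t ∧ numSectors t = n :=
  (finite_setOf_isSchroder n).mem_toFinset

theorem schroderFinset_zero : schroderFinset 0 = {leaf} := by
  ext t
  rw [mem_schroderFinset, Finset.mem_singleton]
  exact ⟨fun h => h.1.numSectors_eq_zero_iff.1 h.2, fun h => h ▸ ⟨.leaf, numSectors_leaf⟩⟩

theorem cutsPrecFinset_subset (t : PTree) : t.cutsPrecFinset ⊆ t.cutsFinset := by
  classical exact Finset.filter_subset _ _

theorem cutsSuccFinset_subset (t : PTree) : t.cutsSuccFinset ⊆ t.cutsFinset := by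
  classical exact Finset.filter_subset _ _

theorem eq_singleton_nil_of_mem_cutsFinset {t : PTree} {c : Finset (List ℕ)}
    (hc : c ∈ cutsFinset t) (h : [] ∈ c) : c = {[]} := by
  refine Finset.eq_singleton_iff_unique_mem.2 ⟨h, fun v hv => ?_⟩
  by_contra hne
  exact (mem_cutsFinset.1 hc).2 [] h v hv (Ne.symm hne) List.nil_prefix

theorem preimage_cons_mem_cutsFinset {cs : List PTree} {c : Finset (List ℕ)}
    (hc : c ∈ cutsFinset (node cs)) (i : Fin cs.length) :
    c.preimage (i.val :: ·) List.cons_injective.injOn ∈ cutsFinset cs[i] := by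
  obtain ⟨hint, hanti⟩ := mem_cutsFinset.1 hc
  simp only [mem_cutsFinset, Finset.mem_preimage]
  refine ⟨fun p hp => ?_, fun p hp q hq hne hpq => ?_⟩
  · obtain ⟨d, hd, hpd⟩ := isInternalAt_cons.1 (hint _ hp)
    rw [List.getElem?_eq_getElem i.2, Option.some_inj] at hd
    exact hd ▸ hpd
  · exact hanti _ hp _ hq (by simpa using hne) (List.cons_prefix_cons.2 ⟨rfl, hpq⟩)

theorem onLeftBranch_cons {i : ℕ} {p : List ℕ} :
    OnLeftBranch (i :: p) ↔ i = 0 ∧ OnLeftBranch p := by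
  simp [OnLeftBranch, List.replicate_succ]

theorem foldl_replaceLeaf_map_cons (pre : List PTree) (t : PTree) (post : List PTree)
    (P : List (List ℕ)) :
    (P.map (pre.length :: ·)).foldl (fun s v => replaceLeaf v s) (node (pre ++ t :: post)) =
      node (pre ++ P.foldl (fun s v => replaceLeaf v s) t :: post) := by
  induction P generalizing t with
  | nil => rfl
  | cons p P ih => simp [replaceLeaf, ih]

theorem foldl_replaceLeaf_branchPaths {α : Type*} {f g : α → PTree} {P : α → List (List ℕ)}
    {l : List α} (h : ∀ a ∈ l, (P a).foldl (fun s v => replaceLeaf v s) (f a) = g a)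
    (pre : List PTree) :
    (branchPaths pre.length (l.map P)).foldl (fun s v => replaceLeaf v s)
      (node (pre ++ l.map f)) = node (pre ++ l.map g) := by
  induction l generalizing pre with
  | nil => rfl
  | cons a l ih =>
    rw [List.forall_mem_cons] at h
    simp only [List.map_cons, branchPaths, List.foldl_append, foldl_replaceLeaf_map_cons, h.1]
    simpa using ih h.2 (pre ++ [g a])

end PTree

/-! ### Trees with an admissible cut -/

/-- A tree together with an admissible cut, encoded by the trunk and the trees hanging at the
leaves of the trunk: the pruned subtree if the leaf is a vertex of the cut, and the single-vertex
tree if it is not. -/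
inductive CutTree : Type
  | hang : PTree → CutTree
  | node : List CutTree → CutTree

namespace CutTree

@[elab_as_elim]
theorem induction {P : CutTree → Prop} (hang : ∀ s, P (hang s))
    (node : ∀ xs, (∀ x ∈ xs, P x) → P (node xs)) (x : CutTree) : P x :=
  CutTree.rec (motive_1 := P) (motive_2 := fun xs => ∀ x ∈ xs, P x) hang node (by simp)
    (fun _ _ h₁ h₂ => by simpa using ⟨h₁, h₂⟩) x

/-- The underlying uncut tree. -/
def total : CutTree → PTree
  | .hang s => s
  | .node xs => .node (xs.map total)

/-- The trunk, with the hanging trees removed. -/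
def trunk : CutTree → PTree
  | .hang _ => PTree.leaf
  | .node xs => .node (xs.map trunk)

/-- The trees hanging at the leaves of the trunk, from left to right, including the trivial
ones. -/
def hanging : CutTree → List PTree
  | .hang s => [s]
  | .node xs => xs.flatMap hanging

open Classical in
/-- The vertices of the cut, from left to right. -/
noncomputable def cut : CutTree → List (List ℕ)
  | .hang s => if s = PTree.leaf then [] else [[]]
  | .node xs => PTree.branchPaths 0 (xs.map cut)

/-- Cut Schröder trees. A leaf of the trunk is always encoded by `CutTree.hang`, never by
`CutTree.node []`. -/
inductive IsSchroder : CutTree → Prop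
  | hang (s : PTree) : s.IsSchroder → IsSchroder (.hang s)
  | node (xs : List CutTree) : 2 ≤ xs.length → (∀ x ∈ xs, IsSchroder x) → IsSchroder (.node xs)

theorem IsSchroder.isSchroder_total {x : CutTree} (h : x.IsSchroder) : x.total.IsSchroder := by
  induction h with
  | hang s hs => rwa [total]
  | node xs h₂ _ ih =>
    rw [total]
    exact .node _ (by simpa using h₂) (by simpa using ih)

theorem IsSchroder.isSchroder_trunk {x : CutTree} (h : x.IsSchroder) : x.trunk.IsSchroder := by
  induction h with
  | hang s _ => rw [trunk]; exact .leaf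
  | node xs h₂ _ ih =>
    rw [trunk]
    exact .node _ (by simpa using h₂) (by simpa using ih)

theorem IsSchroder.isSchroder_of_mem_hanging {x : CutTree} (h : x.IsSchroder) :
    ∀ s ∈ x.hanging, s.IsSchroder := by
  induction h with
  | hang s hs => simpa [hanging] using hs
  | node xs h₂ _ ih => simpa [hanging] using fun s x hx => ih x hx s

theorem IsSchroder.numLeaves_trunk {x : CutTree} (h : x.IsSchroder) :
    x.trunk.numLeaves = x.hanging.length := by
  induction h with
  | hang s _ => simp [trunk, hanging, PTree.numLeaves_leaf]
  | node xs h₂ _ ih =>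
    rw [trunk, PTree.numLeaves_node (by rintro h; simp_all), hanging, List.length_flatMap,
      List.map_map]
    exact congrArg List.sum (List.map_congr_left ih)

theorem IsSchroder.numLeaves_total {x : CutTree} (h : x.IsSchroder) :
    x.total.numLeaves = (x.hanging.map PTree.numLeaves).sum := by
  induction h with
  | hang s _ => simp [total, hanging]
  | node xs h₂ _ ih =>
    rw [total, PTree.numLeaves_node (by rintro h; simp_all), hanging, List.map_flatMap,
      List.flatMap, List.sum_flatten, List.map_map, List.map_map]
    exact congrArg List.sum (List.map_congr_left ih)

theorem IsSchroder.hanging_ne_nil {x : CutTree} (h : x.IsSchroder) : x.hanging ≠ [] := by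
  rw [← List.length_pos_iff, ← h.numLeaves_trunk]
  exact PTree.numLeaves_pos _

theorem not_prefix_of_mem_cut {x : CutTree} {v w : List ℕ} (hv : v ∈ x.cut) (hw : w ∈ x.cut)
    (hne : v ≠ w) : ¬ v <+: w := by
  induction x using CutTree.induction generalizing v w with
  | hang s =>
    rw [cut] at hv hw
    split_ifs at hv hw <;> simp_all
  | node xs ih =>
    rw [cut] at hv hw
    obtain _ | ⟨i, p⟩ := v
    · exact absurd hv PTree.nil_notMem_branchPaths
    obtain _ | ⟨j, q⟩ := w
    · simp
    obtain ⟨x, hx, hp⟩ := PTree.cons_mem_branchPaths_map.1 hv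
    obtain ⟨y, hy, hq⟩ := PTree.cons_mem_branchPaths_map.1 hw
    intro hvw
    obtain ⟨rfl, hpq⟩ := List.cons_prefix_cons.1 hvw
    obtain rfl : x = y := Option.some_inj.1 (hx.symm.trans hy)
    exact ih x (List.mem_of_getElem? hx) hp hq (by simpa using hne) hpq

theorem IsSchroder.eq_hang_total_iff {x : CutTree} (hx : x.IsSchroder) :
    x = .hang x.total ↔ x.total = PTree.leaf ∨ [] ∈ x.cut := by
  cases hx with
  | hang s _ => simp [total, cut, em]
  | node xs h₂ _ =>
    have : xs ≠ [] := List.ne_nil_of_length_pos (by omega)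
    simp [total, cut, PTree.nil_notMem_branchPaths, this]

theorem IsSchroder.eq_hang_total_iff_trunk {x : CutTree} (hx : x.IsSchroder) :
    x = .hang x.total ↔ x.trunk = PTree.leaf := by
  cases hx with
  | hang s _ => simp [total, trunk]
  | node xs h₂ _ =>
    have : xs ≠ [] := List.ne_nil_of_length_pos (by omega)
    simp [trunk, this]

theorem IsSchroder.eq_of_total_eq_of_cut_eq {x y : CutTree} (hx : x.IsSchroder)
    (hy : y.IsSchroder) (ht : x.total = y.total) (hc : ∀ v, v ∈ x.cut ↔ v ∈ y.cut) : x = y := by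
  have hang_iff : x = .hang x.total ↔ y = .hang y.total := by
    rw [hx.eq_hang_total_iff, hy.eq_hang_total_iff, ht, hc]
  induction hx generalizing y with
  | hang s _ => rw [hang_iff.1 (by rw [total]), ← ht, total]
  | node xs _ hxs ih =>
    cases hy with
    | hang s _ => simp [total] at hang_iff
    | node ys _ hys =>
      simp only [total, PTree.node.injEq] at ht
      congr 1
      refine List.ext_getElem (by simpa using congrArg List.length ht) fun i hi hi' => ?_
      have htot : xs[i].total = ys[i].total := by simpa [hi, hi'] using congrArg (·[i]?) ht
      have hcut (p : List ℕ) : p ∈ xs[i].cut ↔ p ∈ ys[i].cut := by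
        simpa [cut, PTree.cons_mem_branchPaths_map, hi, hi'] using hc (i :: p)
      have hgx := hxs _ (List.getElem_mem hi)
      have hgy := hys _ (List.getElem_mem hi')
      refine ih _ (List.getElem_mem hi) hgy htot hcut ?_
      rw [hgx.eq_hang_total_iff, hgy.eq_hang_total_iff, htot, hcut]

theorem IsSchroder.eq_of_trunk_eq_of_hanging_eq {x y : CutTree} (hx : x.IsSchroder)
    (hy : y.IsSchroder) (ht : x.trunk = y.trunk) (hh : x.hanging = y.hanging) : x = y := by
  have hang_iff : x = .hang x.total ↔ y = .hang y.total := by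
    rw [hx.eq_hang_total_iff_trunk, hy.eq_hang_total_iff_trunk, ht]
  induction hx generalizing y with
  | hang s _ =>
    rw [hang_iff.1 (by rw [total])] at hh ⊢
    simpa [hanging] using hh
  | node xs _ hxs ih =>
    cases hy with
    | hang s _ => simp [total] at hang_iff
    | node ys _ hys =>
      simp only [trunk, PTree.node.injEq] at ht
      have hlen : xs.map (fun x => x.hanging.length) = ys.map (fun y => y.hanging.length) := by
        rw [← List.map_congr_left fun x hx => (hxs x hx).numLeaves_trunk,
          ← List.map_congr_left fun y hy => (hys y hy).numLeaves_trunk]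
        simpa [Function.comp_def] using congrArg (List.map PTree.numLeaves) ht
      have hmap : xs.map hanging = ys.map hanging := by
        rw [List.eq_iff_flatten_eq]
        exact ⟨by simpa [hanging, List.flatMap] using hh, by simpa [Function.comp_def] using hlen⟩
      congr 1
      refine List.ext_getElem (by simpa using congrArg List.length ht) fun i hi hi' => ?_
      have htrunk : xs[i].trunk = ys[i].trunk := by simpa [hi, hi'] using congrArg (·[i]?) ht
      have hhang : xs[i].hanging = ys[i].hanging := by
        simpa [hi, hi'] using congrArg (·[i]?) hmap
      have hgx := hxs _ (List.getElem_mem hi)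
      have hgy := hys _ (List.getElem_mem hi')
      refine ih _ (List.getElem_mem hi) hgy htrunk hhang ?_
      rw [hgx.eq_hang_total_iff_trunk, hgy.eq_hang_total_iff_trunk, htrunk]

theorem exists_total_eq_cut_eq {t : PTree} (ht : t.IsSchroder) {c : Finset (List ℕ)}
    (hc : c ∈ t.cutsFinset) : ∃ x : CutTree, x.IsSchroder ∧ x.total = t ∧ x.cut.toFinset = c := by
  induction ht generalizing c with
  | leaf =>
    refine ⟨.hang PTree.leaf, .hang _ .leaf, by rw [total], ?_⟩
    rw [cut, if_pos rfl, List.toFinset_nil, eq_comm, Finset.eq_empty_iff_forall_notMem]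
    intro v hv
    obtain ⟨ds, h, hds⟩ := (PTree.mem_cutsFinset.1 hc).1 v hv
    cases v <;> simp_all [PTree.subtreeAt]
  | node cs h₂ hcs ih =>
    by_cases h0 : [] ∈ c
    · have hne : PTree.node cs ≠ PTree.leaf :=
        PTree.isInternalAt_nil.1 ((PTree.mem_cutsFinset.1 hc).1 _ h0)
      refine ⟨.hang (.node cs), .hang _ (.node cs h₂ hcs), by rw [total], ?_⟩
      rw [cut, if_neg hne, PTree.eq_singleton_nil_of_mem_cutsFinset hc h0, List.toFinset_cons,
        List.toFinset_nil]
      rfl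
    choose x hx htot hcut using fun i : Fin cs.length =>
      ih cs[i] (List.getElem_mem i.2) (PTree.preimage_cons_mem_cutsFinset hc i)
    refine ⟨.node (List.ofFn x), .node _ (by simpa using h₂) (by simpa using hx), ?_, ?_⟩
    · simp [total, List.map_ofFn, Function.comp_def, htot]
    · ext v
      obtain _ | ⟨i, p⟩ := v
      · simp [cut, PTree.nil_notMem_branchPaths, h0]
      rw [List.mem_toFinset, cut, PTree.cons_mem_branchPaths_map]
      have hmem (hi : i < cs.length) : p ∈ (x ⟨i, hi⟩).cut ↔ i :: p ∈ c := by
        rw [← List.mem_toFinset, hcut, Finset.mem_preimage]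
      constructor
      · rintro ⟨y, hy, hp⟩
        obtain ⟨hi, rfl⟩ := List.getElem?_eq_some_iff.1 hy
        rw [List.getElem_ofFn] at hp
        exact (hmem (by simpa using hi)).1 hp
      · intro hp
        obtain ⟨d, hd, -⟩ := PTree.isInternalAt_cons.1 ((PTree.mem_cutsFinset.1 hc).1 _ hp)
        obtain ⟨hi, -⟩ := List.getElem?_eq_some_iff.1 hd
        exact ⟨x ⟨i, hi⟩, by simp [hi], (hmem hi).2 hp⟩

theorem exists_trunk_eq_hanging_eq {t : PTree} (ht : t.IsSchroder) {h : List PTree}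
    (hh : ∀ s ∈ h, s.IsSchroder) (hl : h.length = t.numLeaves) :
    ∃ x : CutTree, x.IsSchroder ∧ x.trunk = t ∧ x.hanging = h := by
  induction ht generalizing h with
  | leaf =>
    rw [PTree.numLeaves_leaf, List.length_eq_one_iff] at hl
    obtain ⟨s, rfl⟩ := hl
    exact ⟨.hang s, .hang s (hh s (by simp)), by rw [trunk], by rw [hanging]⟩
  | node cs h₂ _ ih =>
    rw [PTree.numLeaves_node (List.ne_nil_of_length_pos (by omega))] at hl
    let parts := (cs.map PTree.numLeaves).splitLengths h
    have hparts : parts.length = cs.length := by simp [parts]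
    have hflat : parts.flatten = h := List.flatten_splitLengths _ _ hl.le
    choose x hx htr hha using fun i : Fin cs.length => ih cs[i] (List.getElem_mem i.2)
      (h := parts[i]) (fun s hs => hh s (by
        rw [← hflat]
        exact List.mem_flatten_of_mem (List.getElem_mem _) hs))
      (by simp [parts, List.splitLengths_length_getElem, hl])
    refine ⟨.node (List.ofFn x), .node _ (by simpa using h₂) (by simpa using hx), ?_, ?_⟩
    · simp [trunk, List.map_ofFn, Function.comp_def, htr]
    · rw [hanging, List.flatMap, List.map_ofFn, ← hflat]
      exact congrArg List.flatten (List.ext_getElem (by simp [hparts]) fun i _ _ => by simp [hha])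

theorem foldl_replaceLeaf_cut (x : CutTree) :
    x.cut.foldl (fun s v => PTree.replaceLeaf v s) x.total = x.trunk := by
  induction x using CutTree.induction with
  | hang s =>
    rw [cut, total, trunk]
    split_ifs with h
    · exact h
    · simp [PTree.replaceLeaf]
  | node xs ih =>
    rw [cut, total, trunk]
    exact PTree.foldl_replaceLeaf_branchPaths ih []

theorem IsSchroder.exists_onLeftBranch_iff {x : CutTree} (hx : x.IsSchroder) :
    (∃ v ∈ x.cut, PTree.OnLeftBranch v) ↔ x.hanging.head? ≠ some PTree.leaf := by
  induction hx with
  | hang s _ =>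
    rw [cut]
    split_ifs with h <;> simp [hanging, h, PTree.OnLeftBranch]
  | node xs h₂ hg ih =>
    obtain _ | ⟨x, xs⟩ := xs
    · simp at h₂
    rw [hanging, List.flatMap_cons, List.head?_append_of_ne_nil _ (hg x (by simp)).hanging_ne_nil,
      ← ih x (by simp), cut]
    constructor
    · rintro ⟨_ | ⟨i, p⟩, hv, hl⟩
      · exact absurd hv PTree.nil_notMem_branchPaths
      obtain ⟨rfl, hp0⟩ := PTree.onLeftBranch_cons.1 hl
      obtain ⟨y, hy, hp⟩ := PTree.cons_mem_branchPaths_map.1 hv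
      obtain rfl : x = y := Option.some_inj.1 hy
      exact ⟨p, hp, hp0⟩
    · rintro ⟨p, hp, hl⟩
      exact ⟨0 :: p, PTree.cons_mem_branchPaths_map.2 ⟨x, rfl, hp⟩,
        PTree.onLeftBranch_cons.2 ⟨rfl, hl⟩⟩

end CutTree

/-! ### Gaps of a set of letters -/

/-- The members of a list together with the starting points of the intervals of the prescribed
sizes that they occupy, the first interval starting at `o` and successive intervals being separated
by a single point. -/
def offsets {α : Type*} (size : α → ℕ) : ℕ → List α → List (ℕ × α)
  | _, [] => []
  | o, a :: l => (o, a) :: offsets size (o + size a + 1) l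

section Offsets

variable {α β : Type*} {size : α → ℕ}

theorem offsets_append (o : ℕ) (l l' : List α) :
    offsets size o (l ++ l') =
      offsets size o l ++ offsets size (o + (l.map fun a => size a + 1).sum) l' := by
  induction l generalizing o with
  | nil => rfl
  | cons a l ih => simp [offsets, ih, Nat.add_assoc]

theorem offsets_map (f : β → α) (o : ℕ) (l : List β) :
    offsets size o (l.map f) = (offsets (size ∘ f) o l).map (Prod.map id f) := by
  induction l generalizing o with
  | nil => rfl
  | cons b l ih => simp [offsets, ih]

theorem map_snd_offsets (o : ℕ) (l : List α) : (offsets size o l).map Prod.snd = l := by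
  induction l generalizing o with
  | nil => rfl
  | cons a l ih => rw [offsets, List.map_cons, ih]

theorem le_of_mem_offsets {o : ℕ} {l : List α} {a : ℕ × α} (h : a ∈ offsets size o l) :
    o ≤ a.1 := by
  induction l generalizing o with
  | nil => simp [offsets] at h
  | cons b l ih =>
    rcases List.mem_cons.1 h with rfl | h
    · exact le_rfl
    · have := ih h
      omega

theorem add_lt_of_mem_offsets {o : ℕ} {l : List α} {a : ℕ × α} (h : a ∈ offsets size o l) :
    a.1 + size a.2 < o + (l.map fun b => size b + 1).sum := by
  induction l generalizing o with
  | nil => simp [offsets] at h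
  | cons b l ih =>
    rw [List.map_cons, List.sum_cons]
    rcases List.mem_cons.1 h with rfl | h
    · dsimp only
      omega
    · have := ih h
      omega

theorem pairwise_offsets (o : ℕ) (l : List α) :
    (offsets size o l).Pairwise fun a b => a.1 + size a.2 < b.1 := by
  induction l generalizing o with
  | nil => exact .nil
  | cons a l ih => exact .cons (fun b hb => le_of_mem_offsets hb) (ih _)

end Offsets

/-- The index `i` lies in one of the intervals of lengths `g` separated by single points,
starting at `o`. -/
def Covered (o : ℕ) (g : List ℕ) (i : ℕ) : Prop :=
  ∃ a ∈ offsets id o g, a.1 ≤ i ∧ i < a.1 + a.2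

theorem covered_cons {o k : ℕ} {g : List ℕ} {i : ℕ} :
    Covered o (k :: g) i ↔ (o ≤ i ∧ i < o + k) ∨ Covered (o + k + 1) g i := by
  simp [Covered, offsets]

theorem Covered.le {o : ℕ} {g : List ℕ} {i : ℕ} (h : Covered o g i) : o ≤ i := by
  obtain ⟨a, ha, h, -⟩ := h
  exact (le_of_mem_offsets ha).trans h

/-- The lengths, possibly zero, of the intervals into which the set `S` cuts the `n` indices
from `o` on. -/
def gaps (S : Finset ℕ) : ℕ → ℕ → List ℕ
  | _, 0 => [0]
  | o, n + 1 => if o ∈ S then 0 :: gaps S (o + 1) n else (gaps S (o + 1) n).modifyHead (· + 1)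

section Gaps

variable {S : Finset ℕ} {o k n : ℕ}

theorem gaps_eq_singleton (h : ∀ i, o ≤ i → i < o + n → i ∉ S) : gaps S o n = [n] := by
  induction n generalizing o with
  | zero => rfl
  | succ n ih =>
    rw [gaps, if_neg (h o le_rfl (by omega)), ih fun i hi hi' => h i (by omega) (by omega)]
    rfl

theorem gaps_eq_cons (h : ∀ i, o ≤ i → i < o + k → i ∉ S) (hk : o + k ∈ S) :
    gaps S o (k + n + 1) = k :: gaps S (o + k + 1) n := by
  induction k generalizing o with
  | zero => rw [Nat.zero_add, gaps, if_pos (by simpa using hk), Nat.add_zero]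
  | succ k ih =>
    rw [gaps, if_neg (h o le_rfl (by omega)), Nat.add_right_comm k 1 n,
      ih (fun i hi hi' => h i (by omega) (by omega)) (by convert hk using 1; omega),
      Nat.add_right_comm o 1 k]
    rfl

@[elab_as_elim]
theorem gaps_induction {motive : ℕ → ℕ → List ℕ → Prop}
    (singleton : ∀ o n, (∀ i, o ≤ i → i < o + n → i ∉ S) → motive o n [n])
    (cons : ∀ o k n, (∀ i, o ≤ i → i < o + k → i ∉ S) → o + k ∈ S →
      motive (o + k + 1) n (gaps S (o + k + 1) n) →
      motive o (k + n + 1) (k :: gaps S (o + k + 1) n))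
    (o n : ℕ) : motive o n (gaps S o n) := by
  induction n using Nat.strong_induction_on generalizing o with
  | h n ih =>
    by_cases hex : ∃ k, k < n ∧ o + k ∈ S
    · obtain ⟨k, ⟨hk, hkS⟩, hmin⟩ : ∃ k, (k < n ∧ o + k ∈ S) ∧ ∀ j < k, ¬(j < n ∧ o + j ∈ S) :=
        ⟨Nat.find hex, Nat.find_spec hex, fun _ => Nat.find_min hex⟩
      have hlt : ∀ i, o ≤ i → i < o + k → i ∉ S := fun i hi hi' hS =>
        hmin (i - o) (by omega) ⟨by omega, by rwa [Nat.add_sub_cancel' hi]⟩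
      obtain ⟨m, rfl⟩ : ∃ m, n = k + m + 1 := ⟨n - k - 1, by omega⟩
      rw [gaps_eq_cons hlt hkS]
      exact cons o k m hlt hkS (ih m (by omega) _)
    · push Not at hex
      have hS : ∀ i, o ≤ i → i < o + n → i ∉ S := fun i hi hi' => by
        simpa [Nat.add_sub_cancel' hi] using hex (i - o) (by omega)
      rw [gaps_eq_singleton hS]
      exact singleton o n hS

theorem sum_gaps (S : Finset ℕ) (o n : ℕ) : ((gaps S o n).map (· + 1)).sum = n + 1 := by
  induction o, n using gaps_induction (S := S) with
  | singleton _ n => simp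
  | cons _ k n _ _ ih =>
    rw [List.map_cons, List.sum_cons, ih]
    omega

theorem range'_add_succ (o k n : ℕ) :
    List.range' o (k + n + 1) = List.range' o k ++ (o + k) :: List.range' (o + k + 1) n := by
  rw [Nat.add_assoc, ← List.range'_append_1, List.range'_succ]

theorem length_gaps (S : Finset ℕ) (o n : ℕ) :
    (gaps S o n).length = ((List.range' o n).filter (· ∈ S)).length + 1 := by
  induction o, n using gaps_induction (S := S) with
  | singleton o n h =>
    rw [List.filter_eq_nil_iff.2 fun i hi => ?_]
    · rfl
    · rw [List.mem_range'_1] at hi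
      simpa using h i hi.1 hi.2
  | cons o k n h hk ih =>
    rw [range'_add_succ, List.filter_append, List.filter_eq_nil_iff.2 fun i hi => ?_,
      List.nil_append, List.filter_cons_of_pos (by simpa using hk), List.length_cons,
      List.length_cons, ih]
    rw [List.mem_range'_1] at hi
    simpa using h i hi.1 hi.2

theorem mem_iff_not_covered_gaps {i : ℕ} (hi : o ≤ i) (hi' : i < o + n) :
    i ∈ S ↔ ¬Covered o (gaps S o n) i := by
  induction o, n using gaps_induction (S := S) with
  | singleton o n h => simpa [Covered, offsets, hi, hi'] using h i hi hi'
  | cons o k n h hk ih =>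
    rw [covered_cons, not_or]
    rcases lt_trichotomy i (o + k) with hlt | rfl | hgt
    · simp [h i hi hlt, hi, hlt]
    · simp only [hk, lt_irrefl, and_false, not_false_eq_true, true_and, true_iff]
      exact fun hc => absurd hc.le (by omega)
    · rw [ih (by omega) (by omega)]
      simp [hgt.not_gt]

theorem gaps_eq_of_covered {g : List ℕ} (hg : g ≠ []) (hsum : (g.map (· + 1)).sum = n + 1)
    (h : ∀ i, o ≤ i → i < o + n → (i ∈ S ↔ ¬Covered o g i)) : gaps S o n = g := by
  induction g generalizing o n with
  | nil => exact absurd rfl hg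
  | cons k g ih =>
    rw [List.map_cons, List.sum_cons] at hsum
    rcases eq_or_ne g [] with rfl | hg'
    · obtain rfl : k = n := by simpa using hsum
      exact gaps_eq_singleton fun i hi hi' => by
        simp [h i hi hi', covered_cons, hi, hi']
    · obtain ⟨b, g, rfl⟩ := List.exists_cons_of_ne_nil hg'
      obtain ⟨m, rfl⟩ : ∃ m, n = k + m + 1 := ⟨n - k - 1, by simp at hsum; omega⟩
      rw [gaps_eq_cons (k := k)]
      · congr 1
        refine ih hg' (by omega) fun i hi hi' => ?_
        rw [h i (by omega) (by omega), covered_cons, not_or]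
        simp only [and_iff_right_iff_imp, not_and]
        omega
      · exact fun i hi hi' => by simp [h i hi (by omega), covered_cons, hi, hi']
      · rw [h _ (by omega) (by omega), covered_cons]
        rintro (hc | hc)
        · omega
        · exact absurd hc.le (by omega)

end Gaps

theorem exists_natRunsT_cons (i : ℕ) (l : List ℕ) :
    ∃ r L, natRunsT (i :: l) = (i :: r) :: L := by
  rw [natRunsT]
  split
  · split <;> exact ⟨_, _, rfl⟩
  · exact ⟨_, _, rfl⟩

theorem natRunsT_range'_append (o k : ℕ) {l : List ℕ} (h : ∀ i ∈ l, o + k + 1 < i) :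
    natRunsT (List.range' o (k + 1) ++ l) = List.range' o (k + 1) :: natRunsT l := by
  induction k generalizing o with
  | zero =>
    cases l with
    | nil => rfl
    | cons i l =>
      obtain ⟨r, L, hr⟩ := exists_natRunsT_cons i l
      have hi := h i List.mem_cons_self
      rw [List.range'_one, List.singleton_append, natRunsT, hr]
      exact if_neg (by omega)
  | succ k ih =>
    rw [List.range'_succ, List.cons_append, natRunsT, ih (o + 1) fun i hi => by
      have := h i hi
      omega, List.range'_succ]
    simp

theorem natRunsT_filter_notMem (S : Finset ℕ) (o n : ℕ) :
    natRunsT ((List.range' o n).filter (· ∉ S)) =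
      ((offsets id o (gaps S o n)).filter (·.2 ≠ 0)).map fun a => List.range' a.1 a.2 := by
  have filter_eq {o k : ℕ} (h : ∀ i, o ≤ i → i < o + k → i ∉ S) :
      (List.range' o k).filter (· ∉ S) = List.range' o k :=
    List.filter_eq_self.2 fun i hi => by
      rw [List.mem_range'_1] at hi
      simpa using h i hi.1 hi.2
  induction o, n using gaps_induction (S := S) with
  | singleton o n h =>
    rw [filter_eq h]
    cases n with
    | zero => rfl
    | succ n => simpa [natRunsT, offsets] using natRunsT_range'_append o n (l := []) (by simp)
  | cons o k n h hk ih =>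
    rw [range'_add_succ, List.filter_append, filter_eq h,
      List.filter_cons_of_neg (by simpa using hk), offsets]
    cases k with
    | zero => simpa using ih
    | succ k =>
      rw [natRunsT_range'_append, ih, List.filter_cons_of_pos (by simp), List.map_cons]
      · rfl
      · intro i hi
        have := List.mem_range'_1.1 (List.mem_of_mem_filter hi)
        omega

/-! ### Positions of the pruned subtrees -/

namespace PTree

theorem subtree!_cons (pre : List PTree) (c : PTree) (post : List PTree) (v : List ℕ) :
    subtree! (node (pre ++ c :: post)) (pre.length :: v) = subtree! c v := by
  simp [subtree!, subtreeAt]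

end PTree

namespace CutTree

open PTree (numSectors numLeaves leavesBefore subtree!)

theorem IsSchroder.sum_numSectors_add_one {x : CutTree} (hx : x.IsSchroder) :
    (x.hanging.map fun s => numSectors s + 1).sum = numSectors x.total + 1 := by
  simp only [PTree.numSectors_add_one, hx.numLeaves_total]

theorem map_branchPaths_eq_offsets {xs : List CutTree} (hxs : ∀ x ∈ xs, x.IsSchroder)
    (ih : ∀ x ∈ xs, ∀ o, x.cut.map (fun v => (o + leavesBefore x.total v, subtree! x.total v)) =
      (offsets numSectors o x.hanging).filter (numSectors ·.2 ≠ 0)) (pre : List PTree) (o : ℕ) :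
    (PTree.branchPaths pre.length (xs.map cut)).map (fun v =>
        (o + leavesBefore (.node (pre ++ xs.map total)) v,
          subtree! (.node (pre ++ xs.map total)) v)) =
      (offsets numSectors (o + (pre.map numLeaves).sum) (xs.flatMap hanging)).filter
        (numSectors ·.2 ≠ 0) := by
  induction xs generalizing pre with
  | nil => rfl
  | cons x xs ihxs =>
    rw [List.forall_mem_cons] at hxs ih
    have hpre := ihxs hxs.2 ih.2 (pre ++ [x.total])
    simp only [List.append_assoc, List.singleton_append, List.length_append, List.length_singleton,
      List.map_append, List.map_singleton, List.sum_append, List.sum_singleton] at hpre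
    rw [List.map_cons, List.map_cons, PTree.branchPaths, List.map_append, hpre, List.flatMap_cons,
      offsets_append, List.filter_append, ← ih.1, hxs.1.sum_numSectors_add_one,
      PTree.numSectors_add_one, List.map_map]
    simp only [Function.comp_def, PTree.leavesBefore_cons, PTree.subtree!_cons, Nat.add_assoc]

theorem IsSchroder.map_cut_eq_offsets {x : CutTree} (hx : x.IsSchroder) (o : ℕ) :
    x.cut.map (fun v => (o + leavesBefore x.total v, subtree! x.total v)) =
      (offsets numSectors o x.hanging).filter (numSectors ·.2 ≠ 0) := by
  induction hx generalizing o with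
  | hang s hs =>
    rw [cut, hanging]
    split_ifs with h <;>
      simp [offsets, hs.numSectors_eq_zero_iff, h, PTree.numSectors_leaf, total,
        PTree.leavesBefore_nil, subtree!, PTree.subtreeAt]
  | node xs _ hxs ih => simpa [cut, total, hanging] using map_branchPaths_eq_offsets hxs ih [] o

theorem IsSchroder.pairwise_cut {x : CutTree} (hx : x.IsSchroder) :
    x.cut.Pairwise fun v w => leavesBefore x.total v < leavesBefore x.total w := by
  have h : (x.cut.map fun v => (0 + leavesBefore x.total v, subtree! x.total v)).Pairwise
      fun a b => a.1 < b.1 := by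
    rw [hx.map_cut_eq_offsets]
    exact ((pairwise_offsets 0 _).imp fun h => by omega).sublist List.filter_sublist
  simpa [List.pairwise_map] using h

theorem IsSchroder.mem_offsets_hanging_iff {x : CutTree} (hx : x.IsSchroder) {a : ℕ × PTree}
    (ha : numSectors a.2 ≠ 0) :
    a ∈ offsets numSectors 0 x.hanging ↔
      ∃ v ∈ x.cut, leavesBefore x.total v = a.1 ∧ subtree! x.total v = a.2 := by
  have h := congrArg (a ∈ ·) (hx.map_cut_eq_offsets 0)
  simpa [ha, Prod.ext_iff] using h.symm

theorem IsSchroder.numSectors_subtree!_ne_zero {x : CutTree} (hx : x.IsSchroder) {v : List ℕ}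
    (hv : v ∈ x.cut) : numSectors (subtree! x.total v) ≠ 0 := by
  have h := List.mem_map_of_mem (f := fun v =>
    (0 + leavesBefore x.total v, subtree! x.total v)) hv
  rw [hx.map_cut_eq_offsets] at h
  simpa using (List.mem_filter.1 h).2

theorem IsSchroder.toFinset_cut_mem_cutsFinset {x : CutTree} (hx : x.IsSchroder) :
    x.cut.toFinset ∈ x.total.cutsFinset := by
  refine PTree.mem_cutsFinset.2 ⟨fun v hv => ?_, fun v hv w hw => ?_⟩
  · have hne : subtree! x.total v ≠ PTree.leaf := fun h =>
      hx.numSectors_subtree!_ne_zero (List.mem_toFinset.1 hv) (h ▸ PTree.numSectors_leaf)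
    obtain hs | ⟨⟨cs⟩, hs⟩ := Option.eq_none_or_eq_some (PTree.subtreeAt v x.total)
    · simp [subtree!, hs] at hne
    · exact ⟨cs, hs, by simpa [subtree!, hs] using hne⟩
  · exact not_prefix_of_mem_cut (List.mem_toFinset.1 hv) (List.mem_toFinset.1 hw)

theorem IsSchroder.sortCut_cut {x : CutTree} (hx : x.IsSchroder) :
    PTree.sortCut x.total x.cut.toFinset = x.cut := by
  have hinj := List.inj_on_of_nodup_map (f := leavesBefore x.total) (l := x.cut)
    (List.pairwise_map.2 (hx.pairwise_cut.imp ne_of_lt))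
  have hnodup : x.cut.Nodup := hx.pairwise_cut.imp fun h e => by simp [e] at h
  have hperm : (PTree.sortCut x.total x.cut.toFinset).Perm x.cut :=
    (List.mergeSort_perm _ _).trans (List.toFinset_toList hnodup)
  have hsorted : (PTree.sortCut x.total x.cut.toFinset).Pairwise fun v w =>
      leavesBefore x.total v ≤ leavesBefore x.total w :=
    (List.pairwise_mergeSort (by simpa using fun _ _ _ => le_trans)
      (by simpa using fun _ _ => le_total _ _) _).imp fun h => by simpa using h
  exact hperm.eq_of_pairwise (fun v w hv hw h h' => hinj (hperm.mem_iff.1 hv) hw (le_antisymm h h'))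
    hsorted (hx.pairwise_cut.imp le_of_lt)

theorem IsSchroder.trunkTree_cut {x : CutTree} (hx : x.IsSchroder) :
    PTree.trunkTree x.total x.cut.toFinset = x.trunk := by
  rw [PTree.trunkTree, hx.sortCut_cut, foldl_replaceLeaf_cut]

theorem IsSchroder.removedIdx_cut_iff {x : CutTree} (hx : x.IsSchroder) {i : ℕ} :
    PTree.RemovedIdx x.total x.cut.toFinset i ↔ Covered 0 (x.hanging.map numSectors) i := by
  rw [Covered, offsets_map, PTree.RemovedIdx]
  constructor
  · rintro ⟨v, hv, h⟩
    rw [List.mem_toFinset] at hv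
    exact ⟨_, List.mem_map_of_mem ((hx.mem_offsets_hanging_iff
      (a := (leavesBefore x.total v, subtree! x.total v))
      (hx.numSectors_subtree!_ne_zero hv)).2 ⟨v, hv, rfl, rfl⟩), h⟩
  · rintro ⟨_, ha, h⟩
    obtain ⟨a, has, rfl⟩ := List.mem_map.1 ha
    have h0 : numSectors a.2 ≠ 0 := fun h0 => by
      rw [Prod.map_fst, Prod.map_snd, h0] at h
      exact absurd h.2 h.1.not_gt
    obtain ⟨v, hv, h₁, h₂⟩ := (hx.mem_offsets_hanging_iff h0).1 has
    exact ⟨v, List.mem_toFinset.2 hv, by rw [h₁, h₂]; exact h⟩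

end CutTree

section Sectors

variable {n : ℕ}

/-- The lengths of the intervals into which a set of letters cuts a word of length `n`. -/
def sectorGaps (S : Finset (Fin n)) : List ℕ := gaps (S.map Fin.valEmbedding) 0 n

theorem map_val_sort (S : Finset (Fin n)) :
    (S.sort (· ≤ ·)).map Fin.val = (List.range' 0 n).filter (· ∈ S.map Fin.valEmbedding) := by
  have hsorted := (List.sortedLT_range' 0 n one_ne_zero).pairwise.filter
    (· ∈ S.map Fin.valEmbedding)
  have hS : ((List.range' 0 n).filter (· ∈ S.map Fin.valEmbedding)).toFinset =
      S.map Fin.valEmbedding := by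
    ext i
    simp only [List.mem_toFinset, List.mem_filter, List.mem_range'_1, decide_eq_true_eq]
    refine and_iff_right_of_imp fun hi => ?_
    obtain ⟨j, -, rfl⟩ := Finset.mem_map.1 hi
    exact ⟨Nat.zero_le _, by simp⟩
  calc (S.sort (· ≤ ·)).map Fin.val = (S.map Fin.valEmbedding).sort (· ≤ ·) :=
        Finset.map_sort Fin.valEmbedding S (· ≤ ·) (· ≤ ·) fun _ _ _ _ => Iff.rfl
    _ = _ := by
        conv_lhs => rw [← hS]
        exact (List.toFinset_sort _ (hsorted.imp ne_of_lt)).2 (hsorted.imp le_of_lt)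

theorem length_sectorGaps (S : Finset (Fin n)) : (sectorGaps S).length = S.card + 1 := by
  rw [sectorGaps, length_gaps, ← map_val_sort, List.length_map, Finset.length_sort]

theorem mem_iff_not_covered_sectorGaps {S : Finset (Fin n)} {i : Fin n} :
    i ∈ S ↔ ¬Covered 0 (sectorGaps S) i := by
  rw [sectorGaps, ← mem_iff_not_covered_gaps (Nat.zero_le _) (by omega)]
  exact (Finset.mem_map' Fin.valEmbedding).symm

theorem sectorGaps_injective : Function.Injective (sectorGaps (n := n)) := fun S T h => by
  ext i
  rw [mem_iff_not_covered_sectorGaps, h, ← mem_iff_not_covered_sectorGaps]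

theorem sectorGaps_eq {S : Finset (Fin n)} {g : List ℕ} (hg : g ≠ [])
    (hsum : (g.map (· + 1)).sum = n + 1) (hS : ∀ i, i ∈ S ↔ ¬Covered 0 g i) : sectorGaps S = g :=
  gaps_eq_of_covered hg hsum fun i _ hi => by
    rw [Nat.zero_add] at hi
    rw [← hS ⟨i, hi⟩, ← Finset.mem_map' Fin.valEmbedding]
    rfl

end Sectors

/-! ### Summation over cut trees -/

namespace PTree

/-- The lists of Schröder trees with prescribed numbers of sectors. -/
noncomputable def schroderForests : List ℕ → Finset (List PTree)
  | [] => {[]}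
  | k :: g => (schroderFinset k ×ˢ schroderForests g).map
      ⟨fun q => q.1 :: q.2, fun a b h => by simpa [Prod.ext_iff] using h⟩

theorem mem_schroderForests {g : List ℕ} {h : List PTree} :
    h ∈ schroderForests g ↔ (∀ s ∈ h, IsSchroder s) ∧ h.map numSectors = g := by
  induction g generalizing h with
  | nil => cases h <;> simp [schroderForests]
  | cons k g ih =>
    rw [schroderForests, Finset.mem_map]
    cases h with
    | nil => simp
    | cons s h =>
      have hcons : (∃ q ∈ schroderFinset k ×ˢ schroderForests g, q.1 :: q.2 = s :: h) ↔
          s ∈ schroderFinset k ∧ h ∈ schroderForests g := by simp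
      rw [List.forall_mem_cons, List.map_cons, List.cons.injEq, and_and_and_comm,
        ← mem_schroderFinset, ← ih]
      exact hcons

theorem prod_offsets_sum_schroderFinset {R : Type*} [Semiring R] (f : ℕ → PTree → R) (o : ℕ)
    (g : List ℕ) :
    ((offsets id o g).map fun a => ∑ s ∈ schroderFinset a.2, f a.1 s).prod =
      ∑ h ∈ schroderForests g, ((offsets numSectors o h).map fun a => f a.1 a.2).prod := by
  induction g generalizing o with
  | nil => simp [schroderForests, offsets]
  | cons k g ih =>
    rw [offsets, schroderForests, List.map_cons, List.prod_cons, ih, Finset.sum_map,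
      Finset.sum_product, Finset.sum_mul_sum]
    refine Finset.sum_congr rfl fun s hs => Finset.sum_congr rfl fun h _ => ?_
    rw [← (mem_schroderFinset.1 hs).2]
    rfl

end PTree

namespace CutTree

open PTree (numSectors)

variable {n : ℕ} {M : Type*} [AddCommMonoid M]

theorem injOn_total_cut :
    Set.InjOn (fun x : CutTree => (⟨x.total, x.cut.toFinset⟩ : (_ : PTree) × Finset (List ℕ)))
      {x | x.IsSchroder} := fun x hx y hy h => by
  obtain ⟨ht, hc⟩ : x.total = y.total ∧ x.cut.toFinset = y.cut.toFinset := by simpa using h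
  exact hx.eq_of_total_eq_of_cut_eq hy ht fun v => by
    rw [← List.mem_toFinset, hc, List.mem_toFinset]

theorem finite_setOf_isSchroder (n : ℕ) :
    {x : CutTree | x.IsSchroder ∧ numSectors x.total = n}.Finite :=
  Set.Finite.of_injOn (t := ↑((PTree.schroderFinset n).sigma PTree.cutsFinset))
    (fun x hx => by
      simpa [PTree.mem_schroderFinset] using
        ⟨⟨hx.1.isSchroder_total, hx.2⟩, hx.1.toFinset_cut_mem_cutsFinset⟩)
    (injOn_total_cut.mono fun x hx => hx.1) (Finset.finite_toSet _)

/-- The finite set of cut Schröder trees with `n` sectors. -/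
noncomputable def cutTrees (n : ℕ) : Finset CutTree := (finite_setOf_isSchroder n).toFinset

theorem mem_cutTrees {x : CutTree} : x ∈ cutTrees n ↔ x.IsSchroder ∧ numSectors x.total = n :=
  (finite_setOf_isSchroder n).mem_toFinset

open Classical in
/-- The sectors of a cut tree that remain in the trunk. -/
noncomputable def trunkSectors (n : ℕ) (x : CutTree) : Finset (Fin n) :=
  Finset.univ.filter fun i => ¬PTree.RemovedIdx x.total x.cut.toFinset i

theorem mem_trunkSectors {x : CutTree} {i : Fin n} :
    i ∈ trunkSectors n x ↔ ¬PTree.RemovedIdx x.total x.cut.toFinset i := by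
  simp [trunkSectors]

theorem IsSchroder.mem_trunkSectors_iff_not_covered {x : CutTree} (hx : x.IsSchroder) {i : Fin n} :
    i ∈ trunkSectors n x ↔ ¬Covered 0 (x.hanging.map numSectors) i := by
  rw [mem_trunkSectors, hx.removedIdx_cut_iff]

theorem sectorGaps_trunkSectors {x : CutTree} (hx : x ∈ cutTrees n) :
    sectorGaps (trunkSectors n x) = x.hanging.map numSectors := by
  obtain ⟨hx, hn⟩ := mem_cutTrees.1 hx
  refine sectorGaps_eq (by simpa using hx.hanging_ne_nil) ?_ fun i =>
    hx.mem_trunkSectors_iff_not_covered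
  rw [← hn, ← hx.sum_numSectors_add_one, List.map_map]
  rfl

theorem sum_schroderFinset_cuts {C : PTree → Finset (Finset (List ℕ))}
    (hC : ∀ t, C t ⊆ t.cutsFinset) (f : PTree → Finset (List ℕ) → M) :
    ∑ t ∈ PTree.schroderFinset n, ∑ c ∈ C t, f t c =
      ∑ x ∈ cutTrees n with x.cut.toFinset ∈ C x.total, f x.total x.cut.toFinset := by
  rw [Finset.sum_sigma']
  symm
  refine Finset.sum_nbij (fun x => ⟨x.total, x.cut.toFinset⟩) (fun x hx => ?_)
    (injOn_total_cut.mono fun x hx => ?_) (fun ⟨t, c⟩ htc => ?_) fun _ _ => rfl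
  · obtain ⟨hx, hxC⟩ := Finset.mem_filter.1 hx
    obtain ⟨hx, hn⟩ := mem_cutTrees.1 hx
    exact Finset.mem_sigma.2 ⟨PTree.mem_schroderFinset.2 ⟨hx.isSchroder_total, hn⟩, hxC⟩
  · exact (mem_cutTrees.1 (Finset.mem_filter.1 hx).1).1
  · obtain ⟨ht, hc⟩ := Finset.mem_sigma.1 htc
    obtain ⟨ht, hn⟩ := PTree.mem_schroderFinset.1 ht
    obtain ⟨x, hx, rfl, rfl⟩ := exists_total_eq_cut_eq ht (hC t hc)
    exact ⟨x, Finset.mem_filter.2 ⟨mem_cutTrees.2 ⟨hx, hn⟩, hc⟩, rfl⟩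

theorem exists_trunkSectors_eq {S : Finset (Fin n)} {r : PTree} {h : List PTree}
    (hr : r ∈ PTree.schroderFinset S.card) (hh : h ∈ PTree.schroderForests (sectorGaps S)) :
    ∃ x ∈ cutTrees n, trunkSectors n x = S ∧ x.trunk = r ∧ x.hanging = h := by
  obtain ⟨hr, hrS⟩ := PTree.mem_schroderFinset.1 hr
  obtain ⟨hh, hhS⟩ := PTree.mem_schroderForests.1 hh
  have hlen : h.length = r.numLeaves := by
    rw [← PTree.numSectors_add_one, hrS, ← length_sectorGaps, ← hhS, List.length_map]
  obtain ⟨x, hx, rfl, rfl⟩ := exists_trunk_eq_hanging_eq hr hh hlen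
  have hxn : x ∈ cutTrees n := mem_cutTrees.2 ⟨hx, by
    rw [← Nat.add_right_cancel_iff, ← hx.sum_numSectors_add_one, ← sum_gaps _ 0 n, ← sectorGaps,
      ← hhS, List.map_map]
    rfl⟩
  exact ⟨x, hxn, sectorGaps_injective ((sectorGaps_trunkSectors hxn).trans hhS), rfl, rfl⟩

theorem sum_sectors {T : Finset (Finset (Fin n))} (f : Finset (Fin n) → PTree → List PTree → M) :
    ∑ S ∈ T, ∑ r ∈ PTree.schroderFinset S.card, ∑ h ∈ PTree.schroderForests (sectorGaps S),
        f S r h =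
      ∑ x ∈ cutTrees n with trunkSectors n x ∈ T, f (trunkSectors n x) x.trunk x.hanging := by
  simp only [← Finset.sum_product', Finset.sum_sigma']
  symm
  refine Finset.sum_nbij (fun x => ⟨trunkSectors n x, x.trunk, x.hanging⟩) (fun x hx => ?_)
    (fun x hx y hy h => ?_) (fun ⟨S, r, h⟩ hSrh => ?_) fun _ _ => rfl
  · obtain ⟨hx, hxT⟩ := Finset.mem_filter.1 hx
    have hgaps := sectorGaps_trunkSectors hx
    obtain ⟨hx, -⟩ := mem_cutTrees.1 hx
    have hcard : numSectors x.trunk = (trunkSectors n x).card := by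
      rw [← Nat.add_right_cancel_iff, PTree.numSectors_add_one, hx.numLeaves_trunk,
        ← length_sectorGaps, hgaps, List.length_map]
    simp only [Finset.mem_sigma, Finset.mem_product, PTree.mem_schroderFinset,
      PTree.mem_schroderForests]
    exact ⟨hxT, ⟨hx.isSchroder_trunk, hcard⟩, hx.isSchroder_of_mem_hanging, hgaps.symm⟩
  · have hx := (mem_cutTrees.1 (Finset.mem_filter.1 hx).1).1
    have hy := (mem_cutTrees.1 (Finset.mem_filter.1 hy).1).1
    have htrunk := congrArg (fun a => a.2.1) h
    have hhanging := congrArg (fun a => a.2.2) h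
    exact hx.eq_of_trunk_eq_of_hanging_eq hy htrunk hhanging
  · obtain ⟨hS, hrh⟩ := Finset.mem_sigma.1 (Finset.mem_coe.1 hSrh)
    obtain ⟨hr, hh⟩ := Finset.mem_product.1 hrh
    obtain ⟨x, hx, rfl, rfl, rfl⟩ := exists_trunkSectors_eq hr hh
    exact ⟨x, Finset.mem_filter.2 ⟨hx, hS⟩, rfl⟩

end CutTree

/-! ### The coproduct of a sum of trees -/

section Words

open PTree (numSectors schroderFinset schroderForests)

variable {A : Type*}

theorem map_val_sort_compl {n : ℕ} (S : Finset (Fin n)) :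
    ((Finset.univ \ S).sort (· ≤ ·)).map Fin.val =
      (List.range' 0 n).filter (· ∉ S.map Fin.valEmbedding) := by
  rw [map_val_sort]
  refine List.filter_congr fun i hi => decide_eq_decide.2 ?_
  obtain ⟨j, rfl⟩ : ∃ j : Fin n, Fin.valEmbedding j = i :=
    ⟨⟨i, by simpa using (List.mem_range'_1.1 hi).2⟩, rfl⟩
  simp only [Finset.mem_map', Finset.mem_sdiff, Finset.mem_univ, true_and]

theorem map_get_sort [Zero A] (l : List A) (S : Finset (Fin l.length)) :
    (S.sort (· ≤ ·)).map l.get =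
      ((List.range' 0 l.length).filter (· ∈ S.map Fin.valEmbedding)).map (l.getD · 0) := by
  rw [← map_val_sort, List.map_map]
  exact List.map_congr_left fun j _ => by simp

theorem map_getD_range' [Zero A] (l : List A) {o k : ℕ} (h : o + k ≤ l.length) :
    (List.range' o k).map (l.getD · 0) = (l.drop o).take k := by
  refine List.ext_getElem (by simp; omega) fun i hi _ => ?_
  rw [List.length_map, List.length_range'] at hi
  simp only [List.getElem_map, List.getElem_range', List.getElem_take, List.getElem_drop, one_mul]
  exact List.getD_eq_getElem _ _ (by omega)

theorem prod_map_filter_of_eq_one {α M : Type*} [Monoid M] {p : α → Bool} {f : α → M} {l : List α}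
    (h : ∀ a ∈ l, ¬p a → f a = 1) : ((l.filter p).map f).prod = (l.map f).prod := by
  induction l with
  | nil => rfl
  | cons a l ih =>
    obtain ⟨ha, hl⟩ := List.forall_mem_cons.1 h
    by_cases hp : p a
    · rw [List.filter_cons_of_pos hp, List.map_cons, List.prod_cons, ih hl, List.map_cons,
        List.prod_cons]
    · rw [List.filter_cons_of_neg hp, ih hl, List.map_cons, List.prod_cons, ha hp, one_mul]

theorem PTree.goodTree_of_mem_schroderFinset {l : List A} (hl : l ≠ []) {t : PTree}
    (ht : t ∈ schroderFinset l.length) : GoodTree (t, l) := by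
  obtain ⟨ht, hn⟩ := mem_schroderFinset.1 ht
  refine ⟨ht, fun h => hl ?_, hn.symm⟩
  rwa [← ht.numSectors_eq_zero_iff, hn, List.length_eq_zero_iff] at h

variable [AddCommGroup A] [Module ℂ A]

theorem dTreeOf_leaf (w : List A) : dTreeOf PTree.leaf w = 1 := dif_pos rfl

theorem sentenceOf_cons (w : List A) (ws : List (List A)) :
    sentenceOf (w :: ws) = wordOf w * sentenceOf ws := by
  rw [sentenceOf, List.map_cons, List.prod_cons, sentenceOf]

theorem wordOf_ofFn {m : ℕ} (f : Fin (m + 1) → A) :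
    wordOf (List.ofFn f) = TensorAlgebra.ι ℂ (DirectSum.of (fun m => ⨂[ℂ] (_ : Fin (m + 1)), A) m
      (PiTensorProduct.tprod ℂ f)) := by
  have hof : ∀ {k : ℕ} (g : Fin (k + 1) → A) (h : m = k), (∀ i, g i = f (i.cast (by rw [h]))) →
      DirectSum.of (fun m => ⨂[ℂ] (_ : Fin (m + 1)), A) k (PiTensorProduct.tprod ℂ g) =
        DirectSum.of (fun m => ⨂[ℂ] (_ : Fin (m + 1)), A) m (PiTensorProduct.tprod ℂ f) := by
    rintro k g rfl hg
    rw [show g = f from funext hg]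
  rw [List.ofFn_succ, wordOf, hof _ List.length_ofFn.symm fun i => ?_]
  cases i using Fin.cases with
  | zero => rfl
  | succ i => rw [List.get_cons_succ', List.get_ofFn]; rfl

theorem algHom_ext_wordOf {B : Type*} [Semiring B] [Algebra ℂ B] {f g : TT A →ₐ[ℂ] B}
    (h : ∀ l : List A, l ≠ [] → f (wordOf l) = g (wordOf l)) : f = g := by
  refine TensorAlgebra.hom_ext (DirectSum.linearMap_ext _ fun m => PiTensorProduct.ext
    (MultilinearMap.ext fun v => ?_))
  have hv := h (List.ofFn v) (by simp)
  rw [wordOf_ofFn] at hv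
  exact hv

/-- The sum `Σ_{t ∈ ST(n)} t ⊗ a₁⋯aₙ` of all Schröder trees decorated by a word. -/
noncomputable def schroderSum (l : List A) : HSA A := ∑ t ∈ schroderFinset l.length, dTreeOf t l

theorem map_wordOf {ι : TT A →ₐ[ℂ] HSA A}
    (hι : ∀ l : List A, l ≠ [] → ι (wordOf l) =
      ∑ᶠ t ∈ {t : PTree | t.IsSchroder ∧ t.numLeaves = l.length + 1}, dTreeOf t l) (l : List A) :
    ι (wordOf l) = schroderSum l := by
  rcases eq_or_ne l [] with rfl | hl
  · simp [wordOf, schroderSum, PTree.schroderFinset_zero, dTreeOf_leaf]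
  · have h : {t : PTree | t.IsSchroder ∧ t.numLeaves = l.length + 1} =
        ↑(schroderFinset l.length) := by
      ext t
      simp [PTree.mem_schroderFinset, ← PTree.numSectors_add_one]
    rw [hι l hl, schroderSum, h, finsum_mem_coe_finset]

/-- The product of the trees hung at the leaves of a trunk, each decorated by the letters of `l` at
its own sectors; the sectors of the trunk separate those of consecutive trees. -/
noncomputable def hangingElem (l : List A) (h : List PTree) : HSA A :=
  ((offsets numSectors 0 h).map fun a => dTreeOf a.2 ((l.drop a.1).take (numSectors a.2))).prod

variable {ι : TT A →ₐ[ℂ] HSA A}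

theorem map_subwordElem (hι : ∀ l : List A, ι (wordOf l) = schroderSum l) (l : List A)
    (S : Finset (Fin l.length)) :
    ι (subwordElem l S) = ∑ r ∈ schroderFinset S.card, dTreeOf r ((S.sort (· ≤ ·)).map l.get) := by
  rw [subwordElem, hι, schroderSum, List.length_map, Finset.length_sort]

theorem map_compElem (hι : ∀ l : List A, ι (wordOf l) = schroderSum l) (l : List A)
    (S : Finset (Fin l.length)) :
    ι (compElem l S) = ∑ h ∈ schroderForests (sectorGaps S), hangingElem l h := by
  have hfactor : ∀ a ∈ offsets id 0 (sectorGaps S),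
      ι (wordOf ((List.range' a.1 a.2).map (l.getD · 0))) =
        ∑ s ∈ schroderFinset a.2, dTreeOf s ((l.drop a.1).take (numSectors s)) := fun a ha => by
    have hle : a.1 + a.2 ≤ l.length := by
      have := add_lt_of_mem_offsets ha
      simp only [id_eq, sectorGaps, sum_gaps] at this
      omega
    have hlen : ((l.drop a.1).take a.2).length = a.2 := by simp; omega
    rw [map_getD_range' l hle, hι, schroderSum, hlen]
    exact Finset.sum_congr rfl fun s hs => by rw [(PTree.mem_schroderFinset.1 hs).2]
  simp only [hangingElem]
  rw [← PTree.prod_offsets_sum_schroderFinset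
      fun o s => dTreeOf s ((l.drop o).take (numSectors s)),
    compElem, sentenceOf, map_list_prod, map_val_sort_compl, natRunsT_filter_notMem, ← sectorGaps,
    ← List.map_congr_left hfactor]
  simp only [List.map_map]
  exact prod_map_filter_of_eq_one fun a _ ha => by
    have ha : a.2 = 0 := by simpa using ha
    simp [ha, wordOf]

end Words

namespace CutTree

open PTree (numSectors schroderFinset)

variable {A : Type*} [AddCommGroup A] [Module ℂ A]

theorem IsSchroder.forestOf_trunkPart {x : CutTree} (hx : x.IsSchroder) (w : List A) :
    forestOf (PTree.trunkPart (x.total, w) x.cut.toFinset) =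
      dTreeOf x.trunk (((trunkSectors w.length x).sort (· ≤ ·)).map w.get) := by
  have hw : PTree.trunkWord x.total x.cut.toFinset w =
      ((trunkSectors w.length x).sort (· ≤ ·)).map w.get := by
    rw [map_get_sort, PTree.trunkWord, List.range_eq_range']
    congr 1
    refine List.filter_congr fun i hi => decide_eq_decide.2 ?_
    obtain ⟨j, rfl⟩ : ∃ j : Fin w.length, Fin.valEmbedding j = i :=
      ⟨⟨i, by simpa using (List.mem_range'_1.1 hi).2⟩, rfl⟩
    rw [Finset.mem_map', mem_trunkSectors]
    rfl
  rw [PTree.trunkPart, hx.trunkTree_cut, hw]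
  split_ifs with h
  · rw [h, dTreeOf_leaf, forestOf, List.map_nil, List.prod_nil]
  · rw [forestOf, List.map_singleton, List.prod_singleton]

theorem IsSchroder.forestOf_prunePart {x : CutTree} (hx : x.IsSchroder) (w : List A) :
    forestOf (PTree.prunePart (x.total, w) x.cut.toFinset) = hangingElem w x.hanging := by
  rw [hangingElem, ← prod_map_filter_of_eq_one (p := (numSectors ·.2 ≠ 0)) fun a ha hsec => ?_]
  · rw [← hx.map_cut_eq_offsets, forestOf, PTree.prunePart, hx.sortCut_cut]
    simp only [List.map_map, Function.comp_def, Nat.zero_add]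
  · have hs : a.2 ∈ x.hanging := map_snd_offsets (size := numSectors) 0 x.hanging ▸
      List.mem_map_of_mem ha
    have hleaf : a.2 = PTree.leaf :=
      (hx.isSchroder_of_mem_hanging _ hs).numSectors_eq_zero_iff.1 (by simpa using hsec)
    rw [hleaf, dTreeOf_leaf]

theorem exists_onLeftBranch_cut_iff {n : ℕ} {x : CutTree} (hx : x ∈ cutTrees n) (hn : 0 < n) :
    (∃ v ∈ x.cut.toFinset, PTree.OnLeftBranch v) ↔ ∀ j ∈ trunkSectors n x, j.val ≠ 0 := by
  obtain ⟨hx, -⟩ := mem_cutTrees.1 hx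
  obtain ⟨s, H, hsH⟩ := List.exists_cons_of_ne_nil hx.hanging_ne_nil
  have hs : PTree.IsSchroder s := hx.isSchroder_of_mem_hanging s (by simp [hsH])
  calc (∃ v ∈ x.cut.toFinset, PTree.OnLeftBranch v)
    _ ↔ s ≠ PTree.leaf := by
      simp only [List.mem_toFinset, hx.exists_onLeftBranch_iff, hsH, List.head?_cons, ne_eq,
        Option.some_inj]
    _ ↔ Covered 0 (x.hanging.map numSectors) 0 := by
      rw [hsH, List.map_cons, covered_cons, or_iff_left fun h => by simpa using h.le, ne_eq,
        ← hs.numSectors_eq_zero_iff]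
      omega
    _ ↔ (⟨0, hn⟩ : Fin n) ∉ trunkSectors n x := by
      rw [hx.mem_trunkSectors_iff_not_covered, not_not]
    _ ↔ _ := ⟨fun h j hj h0 => h (Fin.ext (a := j) (b := ⟨0, hn⟩) h0 ▸ hj), fun h h0 => h _ h0 rfl⟩

theorem cut_mem_cutsPrecFinset_iff {n : ℕ} {x : CutTree} (hx : x ∈ cutTrees n) (hn : 0 < n) :
    x.cut.toFinset ∈ x.total.cutsPrecFinset ↔ ∃ j ∈ trunkSectors n x, j.val = 0 := by
  classical
  rw [PTree.cutsPrecFinset, Finset.mem_filter,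
    and_iff_right (mem_cutTrees.1 hx).1.toFinset_cut_mem_cutsFinset, ← not_iff_not]
  push Not
  exact exists_onLeftBranch_cut_iff hx hn

theorem cut_mem_cutsSuccFinset_iff {n : ℕ} {x : CutTree} (hx : x ∈ cutTrees n) (hn : 0 < n) :
    x.cut.toFinset ∈ x.total.cutsSuccFinset ↔ ∀ j ∈ trunkSectors n x, j.val ≠ 0 := by
  classical
  rw [PTree.cutsSuccFinset, Finset.mem_filter,
    and_iff_right (mem_cutTrees.1 hx).1.toFinset_cut_mem_cutsFinset,
    exists_onLeftBranch_cut_iff hx hn]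

theorem map_schroderSum {ι : TT A →ₐ[ℂ] HSA A} (hι : ∀ l : List A, ι (wordOf l) = schroderSum l)
    {d : HSA A →ₗ[ℂ] HSA A ⊗[ℂ] HSA A} {C : PTree → Finset (Finset (List ℕ))}
    (hC : ∀ t, C t ⊆ t.cutsFinset)
    (hd : ∀ (t : PTree) (w : List A), t.IsSchroder → t ≠ PTree.leaf → w.length = numSectors t →
      d (dTreeOf t w) = ∑ c ∈ C t,
        forestOf (PTree.trunkPart (t, w) c) ⊗ₜ[ℂ] forestOf (PTree.prunePart (t, w) c))
    {l : List A} (hl : l ≠ []) {T : Finset (Finset (Fin l.length))}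
    (hT : ∀ x ∈ cutTrees l.length, x.cut.toFinset ∈ C x.total ↔ trunkSectors l.length x ∈ T) :
    d (schroderSum l) =
      Algebra.TensorProduct.map ι ι (∑ S ∈ T, subwordElem l S ⊗ₜ[ℂ] compElem l S) := by
  calc d (schroderSum l)
    _ = ∑ t ∈ schroderFinset l.length, ∑ c ∈ C t,
          forestOf (PTree.trunkPart (t, l) c) ⊗ₜ[ℂ] forestOf (PTree.prunePart (t, l) c) := by
      rw [schroderSum, map_sum]
      refine Finset.sum_congr rfl fun t ht => ?_
      obtain ⟨ht, hleaf, hlen⟩ := PTree.goodTree_of_mem_schroderFinset hl ht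
      exact hd t l ht hleaf hlen
    _ = ∑ x ∈ cutTrees l.length with trunkSectors l.length x ∈ T,
          dTreeOf x.trunk (((trunkSectors l.length x).sort (· ≤ ·)).map l.get) ⊗ₜ[ℂ]
            hangingElem l x.hanging := by
      rw [sum_schroderFinset_cuts hC, Finset.filter_congr hT]
      refine Finset.sum_congr rfl fun x hx => ?_
      have hx := (mem_cutTrees.1 (Finset.mem_filter.1 hx).1).1
      rw [hx.forestOf_trunkPart, hx.forestOf_prunePart]
    _ = ∑ S ∈ T, ∑ r ∈ schroderFinset S.card, ∑ h ∈ PTree.schroderForests (sectorGaps S),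
          dTreeOf r ((S.sort (· ≤ ·)).map l.get) ⊗ₜ[ℂ] hangingElem l h :=
      (sum_sectors fun S r h => dTreeOf r ((S.sort (· ≤ ·)).map l.get) ⊗ₜ[ℂ] hangingElem l h).symm
    _ = _ := by
      simp only [map_sum, Algebra.TensorProduct.map_tmul, map_subwordElem hι, map_compElem hι,
        TensorProduct.sum_tmul, TensorProduct.tmul_sum]
      exact Finset.sum_congr rfl fun S _ => Finset.sum_comm

end CutTree

/-! ### Half-coproducts of products -/

section Forests

variable {A : Type*} [AddCommGroup A] [Module ℂ A]

/-- The span of the products of decorated Schröder trees. -/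
noncomputable def forestSpan (A : Type*) [AddCommGroup A] [Module ℂ A] : Submodule ℂ (HSA A) :=
  Submodule.span ℂ {y | ∃ F : PTree.DForest A, PTree.GoodForest F ∧ y = forestOf F}

theorem schroderSum_mul_mem_forestSpan {l : List A} (hl : l ≠ []) {y : HSA A}
    (hy : y ∈ forestSpan A) : schroderSum l * y ∈ forestSpan A := by
  rw [schroderSum, Finset.sum_mul]
  refine Submodule.sum_mem _ fun t ht => ?_
  suffices forestSpan A ≤ (forestSpan A).comap (LinearMap.mulLeft ℂ (dTreeOf t l)) from this hy
  refine Submodule.span_le.2 ?_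
  rintro _ ⟨F, hF, rfl⟩
  have hgood : PTree.GoodForest ((t, l) :: F) :=
    List.forall_mem_cons.2 ⟨PTree.goodTree_of_mem_schroderFinset hl ht, hF⟩
  exact Submodule.subset_span ⟨_, hgood, by
    rw [LinearMap.mulLeft_apply, forestOf, forestOf, List.map_cons, List.prod_cons]⟩

theorem map_sentenceOf_mem_forestSpan {ι : TT A →ₐ[ℂ] HSA A}
    (hι : ∀ l : List A, ι (wordOf l) = schroderSum l) {ws : List (List A)}
    (hws : ∀ w ∈ ws, w ≠ []) : ι (sentenceOf ws) ∈ forestSpan A := by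
  induction ws with
  | nil =>
    rw [sentenceOf, List.map_nil, List.prod_nil, map_one]
    exact Submodule.subset_span ⟨[], List.forall_mem_nil _, rfl⟩
  | cons w ws ih =>
    obtain ⟨hw, hws⟩ := List.forall_mem_cons.1 hws
    rw [sentenceOf_cons, map_mul, hι]
    exact schroderSum_mul_mem_forestSpan hw (ih hws)

theorem half_coproduct_schroderSum_mul {δ : HSA A →ₐ[ℂ] HSA A ⊗[ℂ] HSA A}
    {δhalf : HSA A →ₗ[ℂ] HSA A ⊗[ℂ] HSA A}
    (hδmul : ∀ d : PTree × List A, PTree.GoodTree d → ∀ F : PTree.DForest A, PTree.GoodForest F →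
      δhalf (dTreeOf d.1 d.2 * forestOf F) = δhalf (dTreeOf d.1 d.2) * δ (forestOf F))
    {l : List A} (hl : l ≠ []) {y : HSA A} (hy : y ∈ forestSpan A) :
    δhalf (schroderSum l * y) = δhalf (schroderSum l) * δ y := by
  suffices forestSpan A ≤ LinearMap.eqLocus (δhalf ∘ₗ LinearMap.mulLeft ℂ (schroderSum l))
      (LinearMap.mulLeft ℂ (δhalf (schroderSum l)) ∘ₗ δ.toLinearMap) from this hy
  refine Submodule.span_le.2 ?_
  rintro _ ⟨F, hF, rfl⟩
  simp only [SetLike.mem_coe, LinearMap.mem_eqLocus, LinearMap.comp_apply,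
    LinearMap.mulLeft_apply, AlgHom.toLinearMap_apply, schroderSum, Finset.sum_mul, map_sum]
  exact Finset.sum_congr rfl fun t ht =>
    hδmul (t, l) (PTree.goodTree_of_mem_schroderFinset hl ht) F hF

theorem half_coproduct_map_sentenceOf {ι : TT A →ₐ[ℂ] HSA A}
    (hι : ∀ l : List A, ι (wordOf l) = schroderSum l)
    {Δ : TT A →ₐ[ℂ] TT A ⊗[ℂ] TT A} {δ : HSA A →ₐ[ℂ] HSA A ⊗[ℂ] HSA A}
    (hδ : ∀ x, δ (ι x) = Algebra.TensorProduct.map ι ι (Δ x))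
    {Δhalf : TT A →ₗ[ℂ] TT A ⊗[ℂ] TT A} {δhalf : HSA A →ₗ[ℂ] HSA A ⊗[ℂ] HSA A}
    (hΔmul : ∀ l : List A, l ≠ [] → ∀ ws : List (List A), (∀ w ∈ ws, w ≠ []) →
      Δhalf (wordOf l * sentenceOf ws) = Δhalf (wordOf l) * Δ (sentenceOf ws))
    (hδmul : ∀ d : PTree × List A, PTree.GoodTree d → ∀ F : PTree.DForest A, PTree.GoodForest F →
      δhalf (dTreeOf d.1 d.2 * forestOf F) = δhalf (dTreeOf d.1 d.2) * δ (forestOf F))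
    (hhalf : ∀ l : List A, l ≠ [] →
      δhalf (schroderSum l) = Algebra.TensorProduct.map ι ι (Δhalf (wordOf l)))
    {ws : List (List A)} (hne : ws ≠ []) (hws : ∀ w ∈ ws, w ≠ []) :
    δhalf (ι (sentenceOf ws)) = Algebra.TensorProduct.map ι ι (Δhalf (sentenceOf ws)) := by
  obtain ⟨w, ws, rfl⟩ := List.exists_cons_of_ne_nil hne
  obtain ⟨hw, hws⟩ := List.forall_mem_cons.1 hws
  rw [sentenceOf_cons, map_mul, hι,
    half_coproduct_schroderSum_mul hδmul hw (map_sentenceOf_mem_forestSpan hι hws), hδ, hhalf w hw,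
    ← map_mul, ← hΔmul w hw ws hws]

theorem counit_schroderSum {ε : HSA A →ₐ[ℂ] ℂ} (hε : ∀ v : WSdec A, ε (TensorAlgebra.ι ℂ v) = 0)
    {l : List A} (hl : l ≠ []) : ε (schroderSum l) = 0 := by
  rw [schroderSum, map_sum]
  refine Finset.sum_eq_zero fun t ht => ?_
  obtain ⟨ht, hleaf, -⟩ := PTree.goodTree_of_mem_schroderFinset hl ht
  rw [dTreeOf, dif_neg hleaf, dif_pos ht, hε]

theorem counit_wordOf {ε : TT A →ₐ[ℂ] ℂ} (hε : ∀ v : TPlus A, ε (TensorAlgebra.ι ℂ v) = 0)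
    {l : List A} (hl : l ≠ []) : ε (wordOf l) = 0 := by
  obtain ⟨x, xs, rfl⟩ := List.exists_cons_of_ne_nil hl
  rw [wordOf, hε]

end Forests

/-- Let `A` be a `ℂ`-vector space and `ι : T(T_+(A)) → H_S(A)` the
algebra morphism with `ι(a_1⋯a_n) = Σ_{t ∈ ST(n)} t ⊗ a_1⋯a_n`. Then `ι` is a coalgebra
morphism: `δ_A ∘ ι = (ι ⊗ ι) ∘ Δ` and `ε_A ∘ ι = ε`; moreover `ι` intertwines the
half-coproducts on the augmentation ideal: `δ_{≺,A} ∘ ι = (ι ⊗ ι) ∘ Δ_≺` and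
`δ_{≻,A} ∘ ι = (ι ⊗ ι) ∘ Δ_≻`. Here all the structure maps are characterized by their
defining combinatorial formulas. -/
theorem iota_is_coalgebra_and_unshuffle_morphism
    (A : Type*) [AddCommGroup A] [Module ℂ A]
    -- the coproduct and counit of T(T_+(A))
    (Δ : TT A →ₐ[ℂ] TT A ⊗[ℂ] TT A)
    (hΔ : ∀ l : List A, l ≠ [] →
      Δ (wordOf l) = ∑ S : Finset (Fin l.length), subwordElem l S ⊗ₜ[ℂ] compElem l S)
    (ε : TT A →ₐ[ℂ] ℂ) (hε : ∀ v : TPlus A, ε (TensorAlgebra.ι ℂ v) = 0)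
    -- the half-coproducts Δ_≺ and Δ_≻ of T(T_+(A))
    (Δprec Δsucc : TT A →ₗ[ℂ] TT A ⊗[ℂ] TT A)
    (hΔprec : ∀ l : List A, l ≠ [] →
      Δprec (wordOf l) = ∑ S ∈ (Finset.univ : Finset (Finset (Fin l.length))).filter
          (fun S => ∃ j ∈ S, j.val = 0), subwordElem l S ⊗ₜ[ℂ] compElem l S)
    (hΔsucc : ∀ l : List A, l ≠ [] →
      Δsucc (wordOf l) = ∑ S ∈ (Finset.univ : Finset (Finset (Fin l.length))).filter
          (fun S => ∀ j ∈ S, j.val ≠ 0), subwordElem l S ⊗ₜ[ℂ] compElem l S)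
    (hΔprecMul : ∀ l : List A, l ≠ [] → ∀ ws : List (List A), (∀ w ∈ ws, w ≠ []) →
      Δprec (wordOf l * sentenceOf ws) = Δprec (wordOf l) * Δ (sentenceOf ws))
    (hΔsuccMul : ∀ l : List A, l ≠ [] → ∀ ws : List (List A), (∀ w ∈ ws, w ≠ []) →
      Δsucc (wordOf l * sentenceOf ws) = Δsucc (wordOf l) * Δ (sentenceOf ws))
    -- the coproduct and counit of H_S(A)
    (δ : HSA A →ₐ[ℂ] HSA A ⊗[ℂ] HSA A)
    (hδ : ∀ (t : PTree) (w : List A), PTree.IsSchroder t → t ≠ PTree.leaf →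
      w.length = PTree.numSectors t →
      δ (dTreeOf t w) = ∑ c ∈ PTree.cutsFinset t,
        forestOf (PTree.trunkPart (t, w) c) ⊗ₜ[ℂ] forestOf (PTree.prunePart (t, w) c))
    (εS : HSA A →ₐ[ℂ] ℂ) (hεS : ∀ v : WSdec A, εS (TensorAlgebra.ι ℂ v) = 0)
    -- the half-coproducts δ_{≺,A} and δ_{≻,A} of H_S(A)
    (δprec δsucc : HSA A →ₗ[ℂ] HSA A ⊗[ℂ] HSA A)
    (hδprec : ∀ (t : PTree) (w : List A), PTree.IsSchroder t → t ≠ PTree.leaf →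
      w.length = PTree.numSectors t →
      δprec (dTreeOf t w) = ∑ c ∈ PTree.cutsPrecFinset t,
        forestOf (PTree.trunkPart (t, w) c) ⊗ₜ[ℂ] forestOf (PTree.prunePart (t, w) c))
    (hδsucc : ∀ (t : PTree) (w : List A), PTree.IsSchroder t → t ≠ PTree.leaf →
      w.length = PTree.numSectors t →
      δsucc (dTreeOf t w) = ∑ c ∈ PTree.cutsSuccFinset t,
        forestOf (PTree.trunkPart (t, w) c) ⊗ₜ[ℂ] forestOf (PTree.prunePart (t, w) c))
    (hδprecMul : ∀ d : PTree × List A, PTree.GoodTree d →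
      ∀ F : PTree.DForest A, PTree.GoodForest F →
        δprec (dTreeOf d.1 d.2 * forestOf F) = δprec (dTreeOf d.1 d.2) * δ (forestOf F))
    (hδsuccMul : ∀ d : PTree × List A, PTree.GoodTree d →
      ∀ F : PTree.DForest A, PTree.GoodForest F →
        δsucc (dTreeOf d.1 d.2 * forestOf F) = δsucc (dTreeOf d.1 d.2) * δ (forestOf F))
    -- the algebra morphism ι
    (ι : TT A →ₐ[ℂ] HSA A)
    (hι : ∀ l : List A, l ≠ [] →
      ι (wordOf l) = ∑ᶠ t ∈ {t : PTree | PTree.IsSchroder t ∧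
        PTree.numLeaves t = l.length + 1}, dTreeOf t l) :
    -- conclusions: ι is a coalgebra morphism and intertwines the half-coproducts
    (∀ x : TT A, δ (ι x) = (Algebra.TensorProduct.map ι ι) (Δ x)) ∧
    (∀ x : TT A, εS (ι x) = ε x) ∧
    (∀ ws : List (List A), ws ≠ [] → (∀ w ∈ ws, w ≠ []) →
      δprec (ι (sentenceOf ws)) =
        (TensorProduct.map ι.toLinearMap ι.toLinearMap) (Δprec (sentenceOf ws))) ∧
    (∀ ws : List (List A), ws ≠ [] → (∀ w ∈ ws, w ≠ []) →
      δsucc (ι (sentenceOf ws)) =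
        (TensorProduct.map ι.toLinearMap ι.toLinearMap) (Δsucc (sentenceOf ws))) := by
  have hι := map_wordOf hι
  have hδι : δ.comp ι = (Algebra.TensorProduct.map ι ι).comp Δ := algHom_ext_wordOf fun l hl => by
    simp only [AlgHom.comp_apply, hι, hΔ l hl]
    exact CutTree.map_schroderSum hι (fun _ => subset_rfl) (d := δ.toLinearMap) hδ hl fun x hx =>
      iff_of_true (CutTree.mem_cutTrees.1 hx).1.toFinset_cut_mem_cutsFinset (Finset.mem_univ _)
  have hει : εS.comp ι = ε := algHom_ext_wordOf fun l hl => by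
    rw [AlgHom.comp_apply, hι, counit_schroderSum hεS hl, counit_wordOf hε hl]
  have hδι := DFunLike.congr_fun hδι
  refine ⟨hδι, DFunLike.congr_fun hει,
    fun _ => half_coproduct_map_sentenceOf hι hδι hΔprecMul hδprecMul fun l hl => ?_,
    fun _ => half_coproduct_map_sentenceOf hι hδι hΔsuccMul hδsuccMul fun l hl => ?_⟩
  · rw [hΔprec l hl]
    refine CutTree.map_schroderSum hι PTree.cutsPrecFinset_subset hδprec hl fun x hx => ?_
    rw [CutTree.cut_mem_cutsPrecFinset_iff hx (List.length_pos_iff.2 hl), Finset.mem_filter_univ]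
  · rw [hΔsucc l hl]
    refine CutTree.map_schroderSum hι PTree.cutsSuccFinset_subset hδsucc hl fun x hx => ?_
    rw [CutTree.cut_mem_cutsSuccFinset_iff hx (List.length_pos_iff.2 hl), Finset.mem_filter_univ]
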